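/- arXiv:2203.01423 — 3 statements merged into one kernel-verified Lean document; each statement's English description precedes it below -/
import Mathlib

section
/- There exists a continuum X = L ∪ J ∪ R in the class 𝒞 with L and R nondegenerate disjoint arcs (realized by the double topologist's sine curve) such that 𝓜(X) = 𝓜(J) ∪ 𝓜(L) ∪ 𝓜(R) ∪ 𝓜*(L;R), the four systems being pairwise disjoint. In particular, for this X every M ∈ 𝓜*(L;R) is a minimal set on X. -/
/-!
The space is the double sine curve drawn over the extended real line: the graph of the triangle
wave `tri`, of period `2π` and with values in `[0, π]`, together with the segments `{⊥} × [0, π]`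
and `{⊤} × [0, π]`.

*Minimal sets of the curve belong to the four systems.* The path components are `L`, `J`, `R`
(`path_trichotomy`), so a continuous self-map sends each of them into one of them, and `J` is dense.
A minimal set meeting `J` must lie in `J` (`subset_JJ`). Otherwise it lies in `L ∪ R`; if it meets
both arcs, then by minimality the map exchanges them, so the traces of the minimal set on `L` and
`R` surject onto each other and have the same cardinality (`card_eq`).

*The four systems consist of minimal sets of the curve.* For `𝓜(J)`, `𝓜(L)`, `𝓜(R)` the map is
composed with a retraction. For `𝓜*(L; R)` the map exchanges `L` and `R`. The trace of `M` on
either arc is not the whole arc, because the second iterate has a fixed point there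
(`arc_not_subset`), so the trace has a gap. The map is altered on the complement of `M` so that in
the gap it sweeps once across the target arc. Such a map lifts through `tri` to a self-map of the
line at bounded distance from the identity (`exists_lift`). After a reflection, the lifts at the
two ends are joined to one map of `J` that extends continuously by the altered maps of the arcs
(`exists_swap_map`).
-/

open Set Topology

/-- A topological space has no isolated points if no singleton is open. -/
def NoIsolatedPoints (Y : Type*) [TopologicalSpace Y] : Prop :=
  ∀ y : Y, ¬ IsOpen ({y} : Set Y)

/-- `(M, f|_M)` is a minimal dynamical system with `f(M) = M`:
`M` is nonempty, `f(M) = M`, and `M` has no nonempty proper closed subset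
invariant under `f|_M`. -/
def MinimalSystemOn {Y : Type*} [TopologicalSpace Y] (f : Y → Y) (M : Set Y) : Prop :=
  M.Nonempty ∧ f '' M = M ∧
    ∀ N, N ⊆ M → N.Nonempty → IsClosed N → f '' N ⊆ N → N = M

/-- The system `𝓜(Y)` of all compact sets `M ⊆ Y` such that there is a continuous
`f : Y → Y` with `f(M) = M` and `(M, f|_M)` a minimal dynamical system. -/
def MSpace (Y : Type*) [TopologicalSpace Y] : Set (Set Y) :=
  {M | IsCompact M ∧ ∃ f : Y → Y, Continuous f ∧ MinimalSystemOn f M}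

/-- `𝓜(Z)` for a subspace `Z ⊆ X` (carrying the subspace topology),
viewed as a system of subsets of `X`. -/
def MSetIn {X : Type*} [TopologicalSpace X] (Z : Set X) : Set (Set X) :=
  {M | ∃ M' ∈ MSpace (↥Z), M = Subtype.val '' M'}

/-- `𝓜*(L; R)`: members of `𝓜(L ∪ R)` (`= 𝓜(L ⊔ R)` for disjoint `L, R`) such that
`M ∩ L` and `M ∩ R` have the same cardinality. -/
def MStarIn {X : Type*} [TopologicalSpace X] (L R : Set X) : Set (Set X) :=
  {M | M ∈ MSetIn (L ∪ R) ∧ Cardinal.mk ↥(M ∩ L) = Cardinal.mk ↥(M ∩ R)}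

/-- An arc: a set homeomorphic to `[0,1]`. -/
def IsArc {X : Type*} [TopologicalSpace X] (A : Set X) : Prop :=
  Nonempty (↥A ≃ₜ ↥(Set.Icc (0:ℝ) 1))

/-- A ray: a set homeomorphic to `[0,∞)`. -/
def IsRaySet {X : Type*} [TopologicalSpace X] (A : Set X) : Prop :=
  Nonempty (↥A ≃ₜ ↥(Set.Ici (0:ℝ)))

/-- A Cantor set: nonempty, compact, totally disconnected, without isolated points
(metrizability is inherited from the ambient space). -/
def IsCantorSet {X : Type*} [TopologicalSpace X] (M : Set X) : Prop :=
  M.Nonempty ∧ IsCompact M ∧ IsTotallyDisconnected M ∧ NoIsolatedPoints ↥M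

/-- A circle: a set homeomorphic to the unit circle `S¹ ⊆ ℂ`. -/
def IsCircleSet {X : Type*} [TopologicalSpace X] (C : Set X) : Prop :=
  Nonempty (↥C ≃ₜ ↥(Metric.sphere (0:ℂ) 1))

/-- A cantoroid: a nonempty compact (metrizable) set without isolated points in which
the union of the degenerate (singleton) connected components is dense. -/
def IsCantoroid {X : Type*} [TopologicalSpace X] (M : Set X) : Prop :=
  M.Nonempty ∧ IsCompact M ∧ NoIsolatedPoints ↥M ∧
    Dense {x : ↥M | connectedComponent x = {x}}

/-- A union of finitely many (at least one) pairwise disjoint circles. -/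
def FinUnionDisjCircles {X : Type*} [TopologicalSpace X] (M : Set X) : Prop :=
  ∃ (n : ℕ) (C : Fin n → Set X), 0 < n ∧ (∀ i, IsCircleSet (C i)) ∧
    Pairwise (Function.onFun Disjoint C) ∧ M = ⋃ i, C i

/-- A local dendrite: a locally connected continuum containing only finitely many circles. -/
def IsLocalDendrite {X : Type*} [TopologicalSpace X] (L : Set X) : Prop :=
  IsCompact L ∧ IsConnected L ∧ LocallyConnectedSpace ↥L ∧
    {C : Set X | C ⊆ L ∧ IsCircleSet C}.Finite

/-- The decomposition `X = L ∪ J ∪ R` witnessing that the continuum `X` belongs to the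
class `𝒞`: `J` is a free interval dense in `X`; `L` and `R` are locally connected
subcontinua of `X` disjoint from `J`; and there are rays `J_L, J_R` with
`J = J_L ∪ J_R` such that `L ∪ J_L` is a compactification of `J_L` and `R ∪ J_R` is a
compactification of `J_R`. -/
structure ClassC {X : Type*} [TopologicalSpace X] (L J R : Set X) : Prop where
  union_eq : L ∪ J ∪ R = Set.univ
  openJ : IsOpen J
  freeJ : Nonempty (↥J ≃ₜ ↥(Set.Ioo (0:ℝ) 1))
  denseJ : Dense J
  compactL : IsCompact L
  connL : IsConnected L
  locConnL : LocallyConnectedSpace ↥L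
  compactR : IsCompact R
  connR : IsConnected R
  locConnR : LocallyConnectedSpace ↥R
  disjLJ : Disjoint L J
  disjRJ : Disjoint R J
  rays : ∃ JL JR : Set X, JL ∪ JR = J ∧ IsRaySet JL ∧ IsRaySet JR ∧
    IsCompact (L ∪ JL) ∧ L ∪ JL ⊆ closure JL ∧
    IsCompact (R ∪ JR) ∧ R ∪ JR ⊆ closure JR

section DoubleSineCurve

open Real

/-! ### The triangle wave and lifting through it -/

/-- The triangle wave of period `2π` with values in `[0, π]`; it equals `|t|` on `[-π, π]`. -/
noncomputable def tri (t : ℝ) : ℝ := arccos (cos t)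

theorem tri_continuous : Continuous tri := continuous_arccos.comp continuous_cos

theorem tri_mem (t : ℝ) : tri t ∈ Icc 0 π := ⟨arccos_nonneg _, arccos_le_pi _⟩

theorem tri_of_mem {t : ℝ} (h : t ∈ Icc 0 π) : tri t = t := arccos_cos h.1 h.2

theorem tri_neg (t : ℝ) : tri (-t) = tri t := by simp [tri]

theorem tri_periodic : Function.Periodic tri (2 * π) := fun t => by simp [tri]

theorem tri_eq_of_cos {u k : ℝ} (hk : k ∈ Icc 0 π) (h : cos u = cos k) : tri u = k := by
  rw [tri, h, arccos_cos hk.1 hk.2]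

/-- A linear ramp from `0` at `p` to `π` at `q`, constant outside `[p, q]`. -/
noncomputable def ramp (p q t : ℝ) : ℝ := max 0 (min π (π * ((t - p) / (q - p))))

theorem ramp_continuous (p q : ℝ) : Continuous (ramp p q) := by
  unfold ramp; fun_prop

theorem ramp_mem (p q t : ℝ) : ramp p q t ∈ Icc 0 π :=
  ⟨le_max_left _ _, max_le pi_pos.le (min_le_left _ _)⟩

theorem ramp_le {p q t : ℝ} (hpq : p < q) (ht : t ≤ p) : ramp p q t = 0 := by
  have : π * ((t - p) / (q - p)) ≤ 0 :=
    mul_nonpos_of_nonneg_of_nonpos pi_pos.le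
      (div_nonpos_of_nonpos_of_nonneg (by linarith) (by linarith))
  unfold ramp
  rw [min_eq_right (by linarith [pi_pos]), max_eq_left this]

theorem ramp_ge {p q t : ℝ} (hpq : p < q) (ht : q ≤ t) : ramp p q t = π := by
  have h1 : 1 ≤ (t - p) / (q - p) := by rw [le_div_iff₀ (by linarith)]; linarith
  have : π ≤ π * ((t - p) / (q - p)) := by nlinarith [pi_pos]
  unfold ramp
  rw [min_eq_left this, max_eq_right pi_pos.le]

/-- Lifting through the triangle wave: a self-map of `[0, π]` may be altered off a closed set `K`
with a gap so that it lifts to a map `H` of the line at bounded distance from the identity. In the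
gap the altered map runs once across `[0, π]`, which pushes the lift forward by one lap each time
`tri` crosses the gap. -/
theorem exists_lift {K : Set ℝ} (hK : IsClosed K) {p q : ℝ} (hp : 0 < p) (hpq : p < q)
    (hq : q < π) (hKd : Disjoint (Icc p q) K) {φ : ℝ → ℝ} (hφ : Continuous φ)
    (hφm : ∀ t, φ t ∈ Icc 0 π) :
    ∃ (H k : ℝ → ℝ) (C : ℝ), Continuous H ∧ Continuous k ∧ (∀ t, k t ∈ Icc 0 π) ∧
      (∀ t ∈ K, k t = φ t) ∧ (∀ t, |H t - t| ≤ C) ∧ ∀ t, tri (H t) = k (tri t) := by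
  have hπ := pi_pos
  obtain ⟨b, hb0, hb1, hb⟩ := exists_continuous_zero_one_of_isClosed isClosed_Icc hK hKd
  set r := ramp p q with hr
  have hrc : Continuous r := ramp_continuous p q
  have hrm : ∀ t, r t ∈ Icc 0 π := ramp_mem p q
  set c : ℝ → ℝ := fun t => (φ t - r t) * b t with hc
  have hcc : Continuous c := by fun_prop
  set E : ℝ → ℝ := fun t => r t - r (-t) + c |t| - t with hE
  have hEc : Continuous E := by fun_prop
  have hr1 : ∀ t ≤ p, r t = 0 := fun t ht => ramp_le hpq ht
  have hr2 : ∀ t, q ≤ t → r t = π := fun t ht => ramp_ge hpq ht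
  have : Fact (0 < 2 * π) := ⟨by positivity⟩
  have hEE : E (-π) = E (-π + 2 * π) := by
    have h1 : -π + 2 * π = π := by ring
    rw [h1]
    simp only [hE, neg_neg, abs_neg]
    rw [hr1 (-π) (by linarith), hr2 π hq.le]; ring
  set G := AddCircle.liftIco (2 * π) (-π) E with hG
  have hGc : Continuous G := AddCircle.liftIco_continuous hEE hEc.continuousOn
  obtain ⟨C, hC⟩ : ∃ C, ∀ x, |G x| ≤ C := by
    obtain ⟨C, hC⟩ := (isCompact_range hGc).isBounded.exists_norm_le
    exact ⟨C, fun x => hC _ (mem_range_self x)⟩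
  have hkm : ∀ t, r t + c t ∈ Icc 0 π := by
    intro t
    have := hb t; have h1 := hφm t; have h2 := hrm t
    simp only [mem_Icc, hc] at *
    constructor
    · nlinarith [mul_nonneg h1.1 this.1, mul_nonneg h2.1 (sub_nonneg.2 this.2)]
    · nlinarith [mul_nonneg (sub_nonneg.2 h1.2) this.1,
        mul_nonneg (sub_nonneg.2 h2.2) (sub_nonneg.2 this.2)]
  refine ⟨fun t => t + G (t : AddCircle (2 * π)), fun t => r t + c t, C,
    continuous_id.add (hGc.comp (AddCircle.continuous_mk' _)), hrc.add hcc, hkm, ?_, ?_, ?_⟩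
  · intro t ht
    have : b t = 1 := hb1 ht
    simp [hc, this]
  · intro t
    simpa using hC _
  · intro t
    apply tri_eq_of_cos (hkm _)
    -- both sides are `2π`-periodic in `t`, so it suffices to compare them on `[-π, π)`
    have hper : Function.Periodic (fun t : ℝ => ((cos (t + G (t : AddCircle (2 * π))),
        cos (r (tri t) + c (tri t))) : ℝ × ℝ)) (2 * π) := by
      intro t
      have h1 : ((t + 2 * π : ℝ) : AddCircle (2 * π)) = t := AddCircle.coe_add_period _ t
      have h2 : tri (t + 2 * π) = tri t := tri_periodic t
      simp only [h1, h2]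
      rw [show t + 2 * π + G (t : AddCircle (2 * π)) = (t + G (t : AddCircle (2 * π))) + 2 * π
        by ring, cos_add_two_pi]
    obtain ⟨s, hs, hts⟩ := hper.exists_mem_Ico (by positivity) t (-π)
    have e1 := congrArg Prod.fst hts
    have e2 := congrArg Prod.snd hts
    simp only at e1 e2
    rw [e1, e2, hG, AddCircle.liftIco_coe_apply hs]
    have hsπ : |s| ≤ π := abs_le.2 ⟨hs.1, by linarith [hs.2]⟩
    have htri : tri s = |s| := by
      have : tri s = tri |s| := by
        rcases abs_choice s with h | h <;> rw [h]
        rw [tri_neg]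
      rw [this, tri_of_mem ⟨abs_nonneg _, hsπ⟩]
    rw [htri]
    have key : s + E s = r s - r (-s) + c |s| := by simp [hE]
    rw [key]
    rcases le_total 0 s with h | h
    · rw [abs_of_nonneg h, hr1 (-s) (by linarith), sub_zero]
    · rw [abs_of_nonpos h, hr1 s (by linarith), zero_sub]
      -- on the descending lap the signs of the ramp and of the correction differ, which is
      -- harmless because the correction vanishes wherever the ramp is not a multiple of `π`
      rcases le_total (-s) p with h' | h'
      · rw [hr1 _ h']; simp
      rcases le_total q (-s) with h'' | h''
      · rw [hr2 _ h'', show -π + c (-s) = (π + c (-s)) - 2 * π by ring, cos_sub_two_pi]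
      · have : c (-s) = 0 := by
          have : b (-s) = 0 := hb0 ⟨h', h''⟩
          simp [hc, this]
        rw [this]; simp

/-! ### The double sine curve -/

/-- The double sine curve, drawn with the triangle wave over the extended real line: the graph of
`tri` over `ℝ` together with the two limit segments `[0, π]` over `⊥` and over `⊤`. -/
def DS : Set (EReal × ℝ) := {z | z.2 ∈ Icc 0 π ∧ (z.1 ∈ Ioo ⊥ ⊤ → z.2 = tri z.1.toReal)}

theorem mem_Ioo_bot_top {x : EReal} : x ∈ Ioo (⊥ : EReal) ⊤ ↔ ∃ t : ℝ, x = t := by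
  constructor
  · intro h; exact ⟨x.toReal, (EReal.coe_toReal h.2.ne h.1.ne').symm⟩
  · rintro ⟨t, rfl⟩; exact ⟨EReal.bot_lt_coe t, EReal.coe_lt_top t⟩

theorem toReal_continuousOn : ContinuousOn EReal.toReal (Ioo ⊥ ⊤) :=
  EReal.continuousOn_toReal.mono fun x hx => by
    simp only [mem_compl_iff, mem_insert_iff, mem_singleton_iff, not_or]
    exact ⟨hx.1.ne', hx.2.ne⟩

theorem DS_isClosed : IsClosed DS := by
  have h1 : IsClosed {z : EReal × ℝ | z.2 ∈ Icc 0 π} := isClosed_Icc.preimage continuous_snd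
  have ho : IsOpen {z : EReal × ℝ | z.1 ∈ Ioo (⊥ : EReal) ⊤} := isOpen_Ioo.preimage continuous_fst
  have hc : ContinuousOn (fun z : EReal × ℝ => z.2 - tri z.1.toReal)
      {z : EReal × ℝ | z.1 ∈ Ioo (⊥ : EReal) ⊤} :=
    continuous_snd.continuousOn.sub (tri_continuous.comp_continuousOn
      (toReal_continuousOn.comp continuous_fst.continuousOn fun _ h => h))
  have h2 := hc.isOpen_inter_preimage ho (isOpen_compl_singleton (x := (0 : ℝ)))
  have : DS = {z : EReal × ℝ | z.2 ∈ Icc 0 π} ∩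
      ({z : EReal × ℝ | z.1 ∈ Ioo (⊥ : EReal) ⊤} ∩
        (fun z : EReal × ℝ => z.2 - tri z.1.toReal) ⁻¹' {0}ᶜ)ᶜ := by
    ext z
    simp only [DS, mem_inter_iff, mem_ofPred_eq, mem_compl_iff, mem_preimage, mem_singleton_iff,
      sub_eq_zero]
    tauto
  rw [this]
  exact h1.inter h2.isClosed_compl

theorem DS_isCompact : IsCompact DS :=
  (isCompact_univ.prod (isCompact_Icc (a := (0 : ℝ)) (b := π))).of_isClosed_subset DS_isClosed
    fun _ hz => ⟨mem_univ _, hz.1⟩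

instance : CompactSpace DS := isCompact_iff_compactSpace.1 DS_isCompact

/-- The parametrization of the dense free interval by the real line. -/
noncomputable def psi (t : ℝ) : DS := ⟨((t : EReal), tri t), tri_mem t, fun _ => rfl⟩

/-- The parametrization of the left limit arc, constant outside `[0, π]`. -/
noncomputable def lam (y : ℝ) : DS :=
  ⟨(⊥, projIcc 0 π pi_pos.le y), (projIcc 0 π pi_pos.le y).2, fun h => absurd h.1 (lt_irrefl _)⟩

/-- The parametrization of the right limit arc, constant outside `[0, π]`. -/
noncomputable def rho (y : ℝ) : DS :=
  ⟨(⊤, projIcc 0 π pi_pos.le y), (projIcc 0 π pi_pos.le y).2, fun h => absurd h.2 (lt_irrefl _)⟩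

/-- The left limit arc. -/
def LL : Set DS := {x | x.1.1 = ⊥}

/-- The right limit arc. -/
def RR : Set DS := {x | x.1.1 = ⊤}

/-- The dense free interval. -/
def JJ : Set DS := {x | x.1.1 ∈ Ioo (⊥ : EReal) ⊤}

theorem psi_continuous : Continuous psi :=
  (continuous_coe_real_ereal.prodMk tri_continuous).subtype_mk _

theorem lam_continuous : Continuous lam :=
  (continuous_const.prodMk (continuous_subtype_val.comp continuous_projIcc)).subtype_mk _

theorem rho_continuous : Continuous rho :=
  (continuous_const.prodMk (continuous_subtype_val.comp continuous_projIcc)).subtype_mk _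

theorem fst_continuous : Continuous fun x : DS => x.1.1 := continuous_fst.comp continuous_subtype_val

theorem snd_continuous : Continuous fun x : DS => x.1.2 := continuous_snd.comp continuous_subtype_val

theorem DS_eq_psi {x : DS} (h : x ∈ JJ) : x = psi x.1.1.toReal := by
  have h2 := x.2.2 h
  apply Subtype.ext
  apply Prod.ext
  · exact (EReal.coe_toReal h.2.ne h.1.ne').symm
  · exact h2

theorem DS_eq_lam {x : DS} (h : x ∈ LL) : x = lam x.1.2 := by
  apply Subtype.ext
  apply Prod.ext
  · exact h
  · simp only [lam]; rw [projIcc_of_mem pi_pos.le x.2.1]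

theorem DS_eq_rho {x : DS} (h : x ∈ RR) : x = rho x.1.2 := by
  apply Subtype.ext
  apply Prod.ext
  · exact h
  · simp only [rho]; rw [projIcc_of_mem pi_pos.le x.2.1]

theorem psi_mem (t : ℝ) : psi t ∈ JJ := mem_Ioo_bot_top.2 ⟨t, rfl⟩
theorem lam_mem (t : ℝ) : lam t ∈ LL := rfl
theorem rho_mem (t : ℝ) : rho t ∈ RR := rfl

theorem lam_snd {y : ℝ} (hy : y ∈ Icc 0 π) : (lam y).1.2 = y := by
  simp only [lam]; rw [projIcc_of_mem pi_pos.le hy]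

theorem rho_snd {y : ℝ} (hy : y ∈ Icc 0 π) : (rho y).1.2 = y := by
  simp only [rho]; rw [projIcc_of_mem pi_pos.le hy]

theorem JJ_eq_range : JJ = range psi := by
  ext x
  exact ⟨fun h => ⟨_, (DS_eq_psi h).symm⟩, by rintro ⟨t, rfl⟩; exact psi_mem t⟩

theorem LL_eq_range : LL = range lam := by
  ext x
  exact ⟨fun h => ⟨_, (DS_eq_lam h).symm⟩, by rintro ⟨t, rfl⟩; exact lam_mem t⟩

theorem RR_eq_range : RR = range rho := by
  ext x
  exact ⟨fun h => ⟨_, (DS_eq_rho h).symm⟩, by rintro ⟨t, rfl⟩; exact rho_mem t⟩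

theorem DS_cases (x : DS) : x ∈ LL ∨ x ∈ JJ ∨ x ∈ RR := by
  by_cases h1 : x.1.1 = ⊥
  · exact Or.inl h1
  by_cases h2 : x.1.1 = ⊤
  · exact Or.inr (Or.inr h2)
  exact Or.inr (Or.inl ⟨bot_lt_iff_ne_bot.2 h1, lt_top_iff_ne_top.2 h2⟩)

theorem LJ_disj : Disjoint LL JJ := disjoint_left.2 fun _ h h' => h'.1.ne' h
theorem RJ_disj : Disjoint RR JJ := disjoint_left.2 fun _ h h' => h'.2.ne h
theorem LR_disj : Disjoint LL RR :=
  disjoint_left.2 fun _ (h : _ = _) (h' : _ = _) => bot_ne_top (h.symm.trans h')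

theorem psi_isEmbedding : IsEmbedding psi :=
  IsEmbedding.of_comp psi_continuous fst_continuous EReal.isEmbedding_coe

theorem JJ_isOpen : IsOpen JJ := isOpen_Ioo.preimage fst_continuous
theorem LL_isClosed : IsClosed LL := isClosed_singleton.preimage fst_continuous
theorem RR_isClosed : IsClosed RR := isClosed_singleton.preimage fst_continuous

/-- The projection onto the second coordinate identifies the left limit arc with `[0, π]`. -/
noncomputable def LL_homeo : LL ≃ₜ Icc 0 π where
  toFun x := ⟨x.1.1.2, x.1.2.1⟩
  invFun y := ⟨lam y, lam_mem y⟩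
  left_inv x := Subtype.ext (DS_eq_lam x.2).symm
  right_inv y := Subtype.ext (lam_snd y.2)
  continuous_toFun := (snd_continuous.comp continuous_subtype_val).subtype_mk _
  continuous_invFun := (lam_continuous.comp continuous_subtype_val).subtype_mk _

/-- The projection onto the second coordinate identifies the right limit arc with `[0, π]`. -/
noncomputable def RR_homeo : RR ≃ₜ Icc 0 π where
  toFun x := ⟨x.1.1.2, x.1.2.1⟩
  invFun y := ⟨rho y, rho_mem y⟩
  left_inv x := Subtype.ext (DS_eq_rho x.2).symm
  right_inv y := Subtype.ext (rho_snd y.2)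
  continuous_toFun := (snd_continuous.comp continuous_subtype_val).subtype_mk _
  continuous_invFun := (rho_continuous.comp continuous_subtype_val).subtype_mk _

theorem locConn_Icc : LocallyConnectedSpace (Icc 0 π) :=
  (isQuotientMap_projIcc (h := pi_pos.le)).isCoinducing.locallyConnectedSpace

theorem tri_shift {y : ℝ} (hy : y ∈ Icc 0 π) (n : ℕ) :
    tri (y - n * (2 * π)) = y ∧ tri (y + n * (2 * π)) = y :=
  ⟨by rw [tri_periodic.sub_nat_mul_eq, tri_of_mem hy],
    by rw [tri_periodic.nat_mul n y, tri_of_mem hy]⟩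

theorem LL_subset_closure : LL ⊆ closure (psi '' Iic 0) := by
  intro x hx
  have hy := x.2.1
  set y := x.1.2
  have ht : Filter.Tendsto (fun n : ℕ => y - n * (2 * π)) Filter.atTop Filter.atBot :=
    Filter.tendsto_atBot_add_const_left _ y (Filter.tendsto_neg_atTop_atBot.comp
      (tendsto_natCast_atTop_atTop.atTop_mul_const (by positivity)))
  have hlim : Filter.Tendsto (fun n : ℕ => psi (y - n * (2 * π))) Filter.atTop (𝓝 x) := by
    rw [tendsto_subtype_rng]
    apply Filter.Tendsto.prodMk_nhds (x := x.1.1) (y := x.1.2)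
    · have hb : x.1.1 = ⊥ := hx
      rw [hb]
      exact EReal.tendsto_coe_nhds_bot_iff.2 ht
    · simp only [(tri_shift hy _).1]
      exact tendsto_const_nhds
  refine mem_closure_of_tendsto hlim ?_
  filter_upwards [ht.eventually_le_atBot 0] with n hn
  exact mem_image_of_mem _ hn

theorem RR_subset_closure : RR ⊆ closure (psi '' Ici 0) := by
  intro x hx
  have hy := x.2.1
  set y := x.1.2
  have ht : Filter.Tendsto (fun n : ℕ => y + n * (2 * π)) Filter.atTop Filter.atTop :=
    Filter.tendsto_atTop_add_const_left _ y
      (tendsto_natCast_atTop_atTop.atTop_mul_const (by positivity))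
  have hlim : Filter.Tendsto (fun n : ℕ => psi (y + n * (2 * π))) Filter.atTop (𝓝 x) := by
    rw [tendsto_subtype_rng]
    apply Filter.Tendsto.prodMk_nhds (x := x.1.1) (y := x.1.2)
    · have hb : x.1.1 = ⊤ := hx
      rw [hb]
      exact EReal.tendsto_coe_nhds_top_iff.2 ht
    · simp only [(tri_shift hy _).2]
      exact tendsto_const_nhds
  refine mem_closure_of_tendsto hlim ?_
  filter_upwards [ht.eventually_ge_atTop 0] with n hn
  exact mem_image_of_mem _ hn

theorem psi_image_subset (S : Set ℝ) : psi '' S ⊆ JJ := by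
  rintro _ ⟨t, -, rfl⟩; exact psi_mem t

theorem JJ_dense : Dense JJ := by
  intro x
  rcases DS_cases x with h | h | h
  · exact closure_mono (psi_image_subset _) (LL_subset_closure h)
  · exact subset_closure h
  · exact closure_mono (psi_image_subset _) (RR_subset_closure h)

instance : ConnectedSpace DS := by
  rw [connectedSpace_iff_univ, ← JJ_dense.closure_eq, JJ_eq_range]
  exact (isConnected_range psi_continuous).closure

theorem LL_union : LL ∪ psi '' Iic 0 = {x : DS | x.1.1 ≤ 0} := by
  ext x
  constructor
  · rintro (h | ⟨t, ht, rfl⟩)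
    · have : x.1.1 = ⊥ := h
      simp [this]
    · exact EReal.coe_nonpos.2 ht
  · intro h
    rcases DS_cases x with h' | h' | h'
    · exact Or.inl h'
    · rw [DS_eq_psi h'] at h ⊢
      exact Or.inr (mem_image_of_mem _ (EReal.coe_nonpos.1 h))
    · have e : x.1.1 = ⊤ := h'
      have h : x.1.1 ≤ 0 := h
      simp [e] at h

theorem RR_union : RR ∪ psi '' Ici 0 = {x : DS | 0 ≤ x.1.1} := by
  ext x
  constructor
  · rintro (h | ⟨t, ht, rfl⟩)
    · have : x.1.1 = ⊤ := h
      simp [this]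
    · exact EReal.coe_nonneg.2 ht
  · intro h
    rcases DS_cases x with h' | h' | h'
    · have e : x.1.1 = ⊥ := h'
      have h : 0 ≤ x.1.1 := h
      simp [e] at h
    · rw [DS_eq_psi h'] at h ⊢
      exact Or.inr (mem_image_of_mem _ (EReal.coe_nonneg.1 h))
    · exact Or.inl h'

theorem JJ_free : Nonempty (JJ ≃ₜ Ioo (0 : ℝ) 1) := by
  have e1 : JJ ≃ₜ ℝ := (Homeomorph.setCongr JJ_eq_range).trans psi_isEmbedding.toHomeomorph.symm
  have e2 : ℝ ≃ₜ Ioo (-1 : ℝ) 1 := Homeomorph.unitBall.trans (Homeomorph.setCongr (by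
    rw [Real.ball_eq_Ioo]; norm_num))
  have e3 : Ioo (-1 : ℝ) 1 ≃ₜ Ioo (0 : ℝ) 1 :=
    ((affineHomeomorph (1 / 2 : ℝ) (1 / 2) (by norm_num)).image _).trans (Homeomorph.setCongr (by
      ext x
      simp only [affineHomeomorph_apply, mem_image, mem_Ioo]
      constructor
      · rintro ⟨y, ⟨h1, h2⟩, rfl⟩; constructor <;> linarith
      · rintro ⟨h1, h2⟩; exact ⟨2 * x - 1, ⟨by linarith, by linarith⟩, by ring⟩))
  exact ⟨(e1.trans e2).trans e3⟩

theorem classC : ClassC LL JJ RR where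
  union_eq := by
    ext x; have := DS_cases x; simp only [mem_union, mem_univ, iff_true]; tauto
  openJ := JJ_isOpen
  freeJ := JJ_free
  denseJ := JJ_dense
  compactL := LL_isClosed.isCompact
  connL := LL_eq_range ▸ isConnected_range lam_continuous
  locConnL := by
    have := locConn_Icc
    exact LL_homeo.locallyConnectedSpace
  compactR := RR_isClosed.isCompact
  connR := RR_eq_range ▸ isConnected_range rho_continuous
  locConnR := by
    have := locConn_Icc
    exact RR_homeo.locallyConnectedSpace
  disjLJ := LJ_disj
  disjRJ := RJ_disj
  rays := by
    refine ⟨psi '' Iic 0, psi '' Ici 0, ?_, ?_, ?_, ?_, ?_, ?_, ?_⟩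
    · rw [← image_union, Iic_union_Ici, image_univ, JJ_eq_range]
    · exact ⟨(psi_isEmbedding.homeomorphImage _).symm.trans
        (((Homeomorph.neg ℝ).image _).trans (Homeomorph.setCongr (by simp)))⟩
    · exact ⟨(psi_isEmbedding.homeomorphImage _).symm⟩
    · rw [LL_union]; exact (isClosed_Iic.preimage fst_continuous).isCompact
    · exact union_subset LL_subset_closure subset_closure
    · rw [RR_union]; exact (isClosed_Ici.preimage fst_continuous).isCompact
    · exact union_subset RR_subset_closure subset_closure

theorem LL_arc : IsArc LL := ⟨LL_homeo.trans (iccHomeoI 0 π pi_pos)⟩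
theorem RR_arc : IsArc RR := ⟨RR_homeo.trans (iccHomeoI 0 π pi_pos)⟩

theorem LL_nontrivial : LL.Nontrivial := by
  refine ⟨lam 0, rfl, lam π, rfl, fun h => ?_⟩
  have := congrArg (fun x : DS => x.1.2) h
  simp only [lam_snd (left_mem_Icc.2 pi_pos.le), lam_snd (right_mem_Icc.2 pi_pos.le)] at this
  exact pi_pos.ne this

theorem RR_nontrivial : RR.Nontrivial := by
  refine ⟨rho 0, rfl, rho π, rfl, fun h => ?_⟩
  have := congrArg (fun x : DS => x.1.2) h
  simp only [rho_snd (left_mem_Icc.2 pi_pos.le), rho_snd (right_mem_Icc.2 pi_pos.le)] at this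
  exact pi_pos.ne this

/-! ### Path components and transfer of minimal sets -/

/-- A path following the graph of `tri` cannot reach the limit segment over `⊥`: near a time at
which it does, it would have to make all the oscillations of `tri` in a short time. -/
theorem path_bot {u : ℝ → EReal} {v : ℝ → ℝ} (hu : Continuous u) (hv : Continuous v)
    (huv : ∀ s t : ℝ, u s = t → v s = tri t) {a : ℝ} (ha : u a = ⊥) : ∀ s, u s = ⊥ := by
  have hπ := pi_gt_three
  have hcl : IsClosed {s | u s = ⊥} := isClosed_singleton.preimage hu
  have hop : IsOpen {s | u s = ⊥} := by
    rw [Metric.isOpen_iff]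
    intro b hb
    have hb : u b = ⊥ := hb
    obtain ⟨δ, hδ, hd⟩ := Metric.continuous_iff.1 hv b 1 one_pos
    refine ⟨δ, hδ, fun s hs => ?_⟩
    by_contra hne
    have hne : u s ≠ ⊥ := hne
    -- every real number below `u s` is a value of `u` on this ball
    have hconn : IsPreconnected (u '' Metric.ball b δ) :=
      (convex_ball b δ).isPreconnected.image _ hu.continuousOn
    obtain ⟨T, -, hT⟩ := EReal.lt_iff_exists_real_btwn.1 (bot_lt_iff_ne_bot.2 hne)
    have hval : ∀ t : ℝ, t ≤ T → ∃ r ∈ Metric.ball b δ, u r = t := by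
      intro t ht
      have : (t : EReal) ∈ u '' Metric.ball b δ :=
        hconn.ordConnected.out ⟨b, Metric.mem_ball_self hδ, hb⟩ ⟨s, hs, rfl⟩
          ⟨bot_le, (EReal.coe_le_coe_iff.2 ht).trans hT.le⟩
      exact this
    have hval2 : ∀ y ∈ Icc 0 π, |y - v b| < 1 := by
      intro y hy
      obtain ⟨n, hn⟩ := exists_nat_ge (π - T)
      have hnn : (0 : ℝ) ≤ n := n.cast_nonneg
      obtain ⟨r, hr, hur⟩ := hval (y - n * (2 * π)) (by
        have := hy.2
        nlinarith)
      have h1 := hd r hr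
      rwa [huv r _ hur, (tri_shift hy n).1, Real.dist_eq] at h1
    have h1 := abs_lt.1 (hval2 0 (left_mem_Icc.2 pi_pos.le))
    have h2 := abs_lt.1 (hval2 π (right_mem_Icc.2 pi_pos.le))
    linarith [h1.1, h2.2]
  intro s
  have := IsClopen.eq_univ ⟨hcl, hop⟩ ⟨a, ha⟩
  exact this.symm.subset (mem_univ s)

theorem DS_snd {x : DS} {t : ℝ} (h : x.1.1 = t) : x.1.2 = tri t := by
  have := x.2.2 (mem_Ioo_bot_top.2 ⟨t, h⟩)
  rw [this, h, EReal.toReal_coe]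

/-- A path in the curve stays in one of `LL`, `JJ`, `RR`: these are the path components. -/
theorem path_trichotomy {γ : ℝ → DS} (hγ : Continuous γ) :
    (∀ s, γ s ∈ LL) ∨ (∀ s, γ s ∈ JJ) ∨ (∀ s, γ s ∈ RR) := by
  have hu := fst_continuous.comp hγ
  have hv := snd_continuous.comp hγ
  by_cases hL : ∃ a, γ a ∈ LL
  · obtain ⟨a, ha⟩ := hL
    exact Or.inl (path_bot hu hv (fun s t h => DS_snd h) ha)
  by_cases hR : ∃ a, γ a ∈ RR
  · obtain ⟨a, ha⟩ := hR
    have ha : (γ a).1.1 = ⊤ := ha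
    refine Or.inr (Or.inr fun s => ?_)
    have := path_bot (u := fun s => - (γ s).1.1) (v := fun s => (γ s).1.2) (a := a)
      (continuous_neg.comp hu) hv
      (fun s t h => by
        rw [← tri_neg]
        apply DS_snd
        rw [EReal.coe_neg, ← h, neg_neg]) (by rw [ha, EReal.neg_top]) s
    exact EReal.neg_eq_bot_iff.1 this
  push Not at hL hR
  refine Or.inr (Or.inl fun s => ?_)
  rcases DS_cases (γ s) with h | h | h
  · exact absurd h (hL s)
  · exact h
  · exact absurd h (hR s)

theorem range_trichotomy {α : ℝ → DS} (hα : Continuous α) {f : DS → DS} (hf : Continuous f) :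
    MapsTo f (range α) LL ∨ MapsTo f (range α) JJ ∨ MapsTo f (range α) RR := by
  simp only [mapsTo_range_iff]
  exact path_trichotomy (hf.comp hα)

/-- A minimal set of the subspace `Z` is a minimal set of `X` as soon as the map, restricted to the
minimal set, extends to a continuous self-map of `X`. -/
theorem mspace_of_mem {X : Type*} [TopologicalSpace X] {Z M : Set X}
    (hM : IsCompact M) (hMZ : M ⊆ Z) {f : Z → Z} {F : X → X} (hF : Continuous F)
    (hfF : ∀ z : Z, z.1 ∈ M → F z = f z) (hmin : MinimalSystemOn f (Subtype.val ⁻¹' M)) :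
    M ∈ MSpace X := by
  obtain ⟨⟨z, hz⟩, him, hmin⟩ := hmin
  refine ⟨hM, F, hF, ⟨z, hz⟩, ?_, ?_⟩
  · ext x
    constructor
    · rintro ⟨y, hy, rfl⟩
      rw [hfF ⟨y, hMZ hy⟩ hy]
      exact him.subset (mem_image_of_mem f (show (⟨y, hMZ hy⟩ : Z) ∈ Subtype.val ⁻¹' M from hy))
    · intro hx
      obtain ⟨y, hy, hyx⟩ := him.symm.subset (show (⟨x, hMZ hx⟩ : Z) ∈ Subtype.val ⁻¹' M from hx)
      exact ⟨y, hy, by rw [hfF y hy, hyx]⟩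
  · intro N hNM hN hNc hFN
    have := hmin (Subtype.val ⁻¹' N) (preimage_mono hNM)
      (by obtain ⟨n, hn⟩ := hN; exact ⟨⟨n, hMZ (hNM hn)⟩, hn⟩)
      (hNc.preimage continuous_subtype_val) (by
        rintro _ ⟨y, hy, rfl⟩
        rw [mem_preimage, ← hfF y (hNM hy)]
        exact hFN (mem_image_of_mem F hy))
    refine hNM.antisymm fun x hx => ?_
    exact this.symm.subset (show (⟨x, hMZ hx⟩ : Z) ∈ Subtype.val ⁻¹' M from hx)

theorem msetIn_data {X : Type*} [TopologicalSpace X] {Z M : Set X} (h : M ∈ MSetIn Z) :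
    IsCompact M ∧ M ⊆ Z ∧ M.Nonempty ∧
      ∃ f : Z → Z, Continuous f ∧ MinimalSystemOn f (Subtype.val ⁻¹' M) := by
  obtain ⟨M', ⟨hc, f, hf, hmin⟩, rfl⟩ := h
  refine ⟨hc.image continuous_subtype_val, by simp, hmin.1.image _, f, hf, ?_⟩
  rwa [preimage_image_eq _ Subtype.val_injective]

theorem msetIn_of_mapsTo {X : Type*} [TopologicalSpace X] [T2Space X] {Z M : Set X}
    (hM : IsCompact M) (hMZ : M ⊆ Z) {F : X → X} (hF : Continuous F) (hFZ : MapsTo F Z Z)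
    (hmin : MinimalSystemOn F M) : M ∈ MSetIn Z := by
  obtain ⟨hne, him, hmin⟩ := hmin
  have hval : (Subtype.val '' (Subtype.val ⁻¹' M : Set Z)) = M := by
    rw [Subtype.image_preimage_coe, inter_eq_right.2 hMZ]
  have hc : IsCompact (Subtype.val ⁻¹' M : Set Z) := by
    rwa [Subtype.isCompact_iff, hval]
  refine ⟨Subtype.val ⁻¹' M, ⟨hc, hFZ.restrict F Z Z, hF.restrict hFZ, ?_, ?_, ?_⟩, hval.symm⟩
  · obtain ⟨x, hx⟩ := hne; exact ⟨⟨x, hMZ hx⟩, hx⟩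
  · ext x
    constructor
    · rintro ⟨y, hy, rfl⟩
      exact him.subset (mem_image_of_mem F hy)
    · intro hx
      obtain ⟨y, hy, hyx⟩ := him.symm.subset hx
      exact ⟨⟨y, hMZ hy⟩, hy, Subtype.ext hyx⟩
  · intro N hNM hN hNc hFN
    have hNcpt : IsCompact N := hc.of_isClosed_subset hNc hNM
    have := hmin (Subtype.val '' N) (by rintro _ ⟨y, hy, rfl⟩; exact hNM hy) (hN.image _)
      (hNcpt.image continuous_subtype_val).isClosed (by
        rintro _ ⟨_, ⟨y, hy, rfl⟩, rfl⟩
        exact ⟨_, hFN (mem_image_of_mem _ hy), rfl⟩)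
    rw [← this, preimage_image_eq _ Subtype.val_injective]

/-- An invariant closed set meeting a minimal set contains it. -/
theorem MinimalSystemOn.subset_of_mapsTo {Y : Type*} [TopologicalSpace Y] {f : Y → Y} {M A : Set Y}
    (h : MinimalSystemOn f M) (hMc : IsClosed M) (hA : IsClosed A) (hfA : MapsTo f (M ∩ A) A)
    (hne : (M ∩ A).Nonempty) : M ⊆ A := by
  have := h.2.2 (M ∩ A) inter_subset_left hne (hMc.inter hA) (by
    rintro _ ⟨y, hy, rfl⟩
    exact ⟨h.2.1.subset (mem_image_of_mem f hy.1), hfA hy⟩)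
  exact this ▸ inter_subset_right

/-- If a map exchanges `A` and `B` and maps `M` onto itself, then the traces of `M` on `A` and `B`
surject onto each other, hence are equipotent. -/
theorem card_eq {Y : Type*} {A B M : Set Y} {f : Y → Y} (hM : f '' M = M) (hAB : Disjoint A B)
    (hMAB : M ⊆ A ∪ B) (hA : MapsTo f A B) (hB : MapsTo f B A) :
    Cardinal.mk ↥(M ∩ A) = Cardinal.mk ↥(M ∩ B) := by
  have key : ∀ {A B : Set Y}, Disjoint A B → M ⊆ A ∪ B → MapsTo f A B → MapsTo f B A →
      Cardinal.mk ↥(M ∩ A) ≤ Cardinal.mk ↥(M ∩ B) := by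
    intro A B hAB hMAB hA hB
    have : M ∩ A ⊆ f '' (M ∩ B) := by
      rintro x ⟨hx, hxA⟩
      obtain ⟨y, hy, rfl⟩ := hM.symm.subset hx
      rcases hMAB hy with h | h
      · exact absurd (hA h) (disjoint_left.1 hAB hxA)
      · exact ⟨y, ⟨hy, h⟩, rfl⟩
    exact (Cardinal.mk_le_mk_of_subset this).trans Cardinal.mk_image_le
  exact le_antisymm (key hAB hMAB hA hB) (key hAB.symm (union_comm A B ▸ hMAB) hB hA)

/-- A minimal set meeting `J` lies in `J`, and then the map sends `J` into itself. -/
theorem subset_JJ {f : DS → DS} (hf : Continuous f) {M : Set DS} (hM : IsCompact M)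
    (hmin : MinimalSystemOn f M) (hne : (M ∩ JJ).Nonempty) : M ⊆ JJ ∧ MapsTo f JJ JJ := by
  have hMc := hM.isClosed
  have him : ∀ x ∈ M, f x ∈ M := fun x hx => hmin.2.1.subset (mem_image_of_mem f hx)
  obtain ⟨x₀, hx₀M, hx₀J⟩ := hne
  have noL : ¬ M ⊆ LL := fun h => disjoint_left.1 LJ_disj (h hx₀M) hx₀J
  have noR : ¬ M ⊆ RR := fun h => disjoint_left.1 RJ_disj (h hx₀M) hx₀J
  -- a closed set containing the image of the dense set `J` contains the image of everything
  have dens : ∀ A : Set DS, IsClosed A → MapsTo f JJ A → M ⊆ A := by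
    intro A hA h
    have hall : ∀ x, f x ∈ A := by
      intro x
      exact closure_minimal h (hA.preimage hf) (JJ_dense x)
    rw [← hmin.2.1]
    rintro _ ⟨y, -, rfl⟩
    exact hall y
  have hJ : MapsTo f JJ JJ := by
    have := range_trichotomy psi_continuous hf
    rw [← JJ_eq_range] at this
    rcases this with h | h | h
    · exact absurd (dens _ LL_isClosed h) noL
    · exact h
    · exact absurd (dens _ RR_isClosed h) noR
  refine ⟨?_, hJ⟩
  -- it suffices that every point of `M` is mapped into `J`
  have fin : (∀ x ∈ M, f x ∈ JJ) → M ⊆ JJ := by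
    intro h
    rw [← hmin.2.1]
    rintro _ ⟨y, hy, rfl⟩
    exact h y hy
  have hLRc : IsClosed (LL ∪ RR) := LL_isClosed.union RR_isClosed
  have noLR : MapsTo f (LL ∪ RR) (LL ∪ RR) → M ⊆ JJ := by
    intro h x hx
    by_contra hxJ
    have hx' : x ∈ LL ∪ RR := by
      rcases DS_cases x with h | h | h
      · exact Or.inl h
      · exact absurd h hxJ
      · exact Or.inr h
    rcases hmin.subset_of_mapsTo hMc hLRc (h.mono_left inter_subset_right) ⟨x, hx, hx'⟩ hx₀M
      with h | h
    · exact disjoint_left.1 LJ_disj h hx₀J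
    · exact disjoint_left.1 RJ_disj h hx₀J
  have skipL : MapsTo f LL LL → ∀ x ∈ M, x ∉ LL := fun h x hx hxL =>
    noL (hmin.subset_of_mapsTo hMc LL_isClosed (h.mono_left inter_subset_right) ⟨x, hx, hxL⟩)
  have skipR : MapsTo f RR RR → ∀ x ∈ M, x ∉ RR := fun h x hx hxR =>
    noR (hmin.subset_of_mapsTo hMc RR_isClosed (h.mono_left inter_subset_right) ⟨x, hx, hxR⟩)
  have hL := range_trichotomy lam_continuous hf
  have hR := range_trichotomy rho_continuous hf
  rw [← LL_eq_range] at hL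
  rw [← RR_eq_range] at hR
  -- an arc mapped into itself misses `M`; if one arc `A` is mapped into `J` and the other into `A`,
  -- then nothing is mapped into the other arc, so `M = f (M)` misses it
  rcases hL with hL | hL | hL <;> rcases hR with hR | hR | hR
  · exact noLR (by rintro x (h | h); exacts [Or.inl (hL h), Or.inl (hR h)])
  · exact fin fun x hx => by
      rcases DS_cases x with h | h | h
      exacts [absurd h (skipL hL x hx), hJ h, hR h]
  · exact noLR (by rintro x (h | h); exacts [Or.inl (hL h), Or.inr (hR h)])
  · have : ∀ x ∈ M, x ∉ RR := by
      rw [← hmin.2.1]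
      rintro _ ⟨y, hy, rfl⟩ hyR
      rcases DS_cases y with h | h | h
      · exact disjoint_left.1 RJ_disj hyR (hL h)
      · exact disjoint_left.1 RJ_disj hyR (hJ h)
      · exact disjoint_left.1 LR_disj (hR h) hyR
    exact fin fun x hx => by
      rcases DS_cases x with h | h | h
      exacts [hL h, hJ h, absurd h (this x hx)]
  · exact fin fun x hx => by
      rcases DS_cases x with h | h | h
      exacts [hL h, hJ h, hR h]
  · exact fin fun x hx => by
      rcases DS_cases x with h | h | h
      exacts [hL h, hJ h, absurd h (skipR hR x hx)]
  · exact noLR (by rintro x (h | h); exacts [Or.inr (hL h), Or.inl (hR h)])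
  · have : ∀ x ∈ M, x ∉ LL := by
      rw [← hmin.2.1]
      rintro _ ⟨y, hy, rfl⟩ hyL
      rcases DS_cases y with h | h | h
      · exact disjoint_left.1 LR_disj hyL (hL h)
      · exact disjoint_left.1 LJ_disj hyL (hJ h)
      · exact disjoint_left.1 LJ_disj hyL (hR h)
    exact fin fun x hx => by
      rcases DS_cases x with h | h | h
      exacts [absurd h (this x hx), hJ h, hR h]
  · exact noLR (by rintro x (h | h); exacts [Or.inr (hL h), Or.inr (hR h)])

theorem mspace_subset : MSpace DS ⊆ MSetIn JJ ∪ MSetIn LL ∪ MSetIn RR ∪ MStarIn LL RR := by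
  rintro M ⟨hM, f, hf, hmin⟩
  have hMc := hM.isClosed
  have him : ∀ x ∈ M, f x ∈ M := fun x hx => hmin.2.1.subset (mem_image_of_mem f hx)
  by_cases hJ : (M ∩ JJ).Nonempty
  · obtain ⟨h1, h2⟩ := subset_JJ hf hM hmin hJ
    exact Or.inl (Or.inl (Or.inl (msetIn_of_mapsTo hM h1 hf h2 hmin)))
  have hMLR : M ⊆ LL ∪ RR := by
    intro x hx
    rcases DS_cases x with h | h | h
    · exact Or.inl h
    · exact absurd ⟨x, hx, h⟩ hJ
    · exact Or.inr h
  have hJ' : ∀ x ∈ M, x ∉ JJ := fun x hx h => hJ ⟨x, hx, h⟩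
  have hL := range_trichotomy lam_continuous hf
  have hR := range_trichotomy rho_continuous hf
  rw [← LL_eq_range] at hL
  rw [← RR_eq_range] at hR
  by_cases hML : M ⊆ LL
  · obtain ⟨x, hx⟩ := hmin.1
    have : MapsTo f LL LL := by
      rcases hL with h | h | h
      · exact h
      · exact absurd (h (hML hx)) (hJ' _ (him x hx))
      · exact absurd (h (hML hx)) (disjoint_left.1 LR_disj (hML (him x hx)))
    exact Or.inl (Or.inl (Or.inr (msetIn_of_mapsTo hM hML hf this hmin)))
  by_cases hMR : M ⊆ RR
  · obtain ⟨x, hx⟩ := hmin.1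
    have : MapsTo f RR RR := by
      rcases hR with h | h | h
      · exact absurd (hMR (him x hx)) (disjoint_left.1 LR_disj (h (hMR hx)))
      · exact absurd (h (hMR hx)) (hJ' _ (him x hx))
      · exact h
    exact Or.inl (Or.inr (msetIn_of_mapsTo hM hMR hf this hmin))
  obtain ⟨a, haM, ha⟩ := not_subset.1 hML
  obtain ⟨b, hbM, hb⟩ := not_subset.1 hMR
  have haR : a ∈ RR := (hMLR haM).resolve_left ha
  have hbL : b ∈ LL := (hMLR hbM).resolve_right hb
  have hL' : MapsTo f LL RR := by
    rcases hL with h | h | h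
    · exact absurd (hmin.subset_of_mapsTo hMc LL_isClosed (h.mono_left inter_subset_right)
        ⟨b, hbM, hbL⟩) hML
    · exact absurd (h hbL) (hJ' _ (him b hbM))
    · exact h
  have hR' : MapsTo f RR LL := by
    rcases hR with h | h | h
    · exact h
    · exact absurd (h haR) (hJ' _ (him a haM))
    · exact absurd (hmin.subset_of_mapsTo hMc RR_isClosed (h.mono_left inter_subset_right)
        ⟨a, haM, haR⟩) hMR
  refine Or.inr ⟨msetIn_of_mapsTo hM hMLR hf ?_ hmin, card_eq hmin.2.1 LR_disj hMLR hL' hR'⟩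
  rintro x (h | h)
  exacts [Or.inr (hL' h), Or.inl (hR' h)]

/-! ### Extension of minimal maps to the whole curve -/

theorem mspace_of_JJ : MSetIn JJ ⊆ MSpace DS := by
  intro M h
  obtain ⟨hM, hMJ, -, f, hf, hmin⟩ := msetIn_data h
  obtain ⟨N, hN⟩ : ∃ N, ∀ x ∈ M, |x.1.1.toReal| ≤ N := by
    have hc : ContinuousOn (fun x : DS => x.1.1.toReal) M :=
      toReal_continuousOn.comp fst_continuous.continuousOn hMJ
    obtain ⟨N, hN⟩ := (hM.image_of_continuousOn hc).isBounded.exists_norm_le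
    exact ⟨N, fun x hx => hN _ (mem_image_of_mem _ hx)⟩
  -- clamping the first coordinate retracts the curve onto a compact interval of `J` containing `M`
  set cl : EReal → EReal := fun x => max ((-N : ℝ) : EReal) (min ((N : ℝ) : EReal) x) with hcl
  have hclc : Continuous cl := by fun_prop
  have hclm : ∀ x, cl x ∈ Ioo (⊥ : EReal) ⊤ := fun x =>
    ⟨lt_max_of_lt_left (EReal.bot_lt_coe _),
      max_lt (EReal.coe_lt_top _) (min_lt_of_left_lt (EReal.coe_lt_top _))⟩
  have hrc : Continuous fun x : DS => (cl x.1.1).toReal :=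
    toReal_continuousOn.comp_continuous (hclc.comp fst_continuous) fun x => hclm _
  have hr : ∀ x ∈ M, (cl x.1.1).toReal = x.1.1.toReal := by
    intro x hx
    have h1 := abs_le.1 (hN x hx)
    obtain ⟨t, ht⟩ := mem_Ioo_bot_top.1 (hMJ hx)
    rw [ht, EReal.toReal_coe] at h1
    rw [ht, hcl]
    simp only
    rw [min_eq_right (EReal.coe_le_coe_iff.2 h1.2), max_eq_right (EReal.coe_le_coe_iff.2 h1.1)]
  refine mspace_of_mem hM hMJ
    (F := fun x => (f ⟨psi (cl x.1.1).toReal, psi_mem _⟩ : DS))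
    (continuous_subtype_val.comp (hf.comp ((psi_continuous.comp hrc).subtype_mk _))) ?_ hmin
  intro z hz
  congr 2
  apply Subtype.ext
  simp only [hr _ hz]
  exact (DS_eq_psi z.2).symm

theorem mspace_of_LL : MSetIn LL ⊆ MSpace DS := by
  intro M h
  obtain ⟨hM, hMJ, -, f, hf, hmin⟩ := msetIn_data h
  refine mspace_of_mem hM hMJ (F := fun x => (f ⟨lam x.1.2, lam_mem _⟩ : DS))
    (continuous_subtype_val.comp (hf.comp ((lam_continuous.comp snd_continuous).subtype_mk _)))
    ?_ hmin
  intro z hz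
  congr 2
  exact Subtype.ext (DS_eq_lam z.2).symm

theorem mspace_of_RR : MSetIn RR ⊆ MSpace DS := by
  intro M h
  obtain ⟨hM, hMJ, -, f, hf, hmin⟩ := msetIn_data h
  refine mspace_of_mem hM hMJ (F := fun x => (f ⟨rho x.1.2, rho_mem _⟩ : DS))
    (continuous_subtype_val.comp (hf.comp ((rho_continuous.comp snd_continuous).subtype_mk _)))
    ?_ hmin
  intro z hz
  congr 2
  exact Subtype.ext (DS_eq_rho z.2).symm

/-- The map of the curve that exchanges the limit arcs by two liftable maps: on `J` it is, up to
orientation, the lift of the one at one end and the lift of the other at the other end. -/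
theorem exists_swap_map {HL kL HR kR : ℝ → ℝ} {CL CR : ℝ} (hHL : Continuous HL) (hHR : Continuous HR)
    (hkL : Continuous kL) (hkR : Continuous kR)
    (hkLm : ∀ t, kL t ∈ Icc 0 π) (hkRm : ∀ t, kR t ∈ Icc 0 π)
    (hCL : ∀ t, |HL t - t| ≤ CL) (hCR : ∀ t, |HR t - t| ≤ CR)
    (htL : ∀ t, tri (HL t) = kL (tri t)) (htR : ∀ t, tri (HR t) = kR (tri t)) :
    ∃ F : DS → DS, Continuous F ∧ (∀ x ∈ LL, F x = rho (kL x.1.2)) ∧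
      ∀ x ∈ RR, F x = lam (kR x.1.2) := by
  classical
  set l : ℝ → ℝ := fun t => max 0 (min 1 t) with hl
  set Φ : ℝ → ℝ := fun t => -((1 - l t) * HL t + l t * HR t) with hΦ
  have hΦc : Continuous Φ := by fun_prop
  have hΦL : ∀ t ≤ 0, Φ t = -HL t := by
    intro t ht
    have : l t = 0 := max_eq_left (min_le_of_right_le ht)
    simp [hΦ, this]
  have hΦR : ∀ t, 1 ≤ t → Φ t = -HR t := by
    intro t ht
    have : l t = 1 := by simp [hl, min_eq_left ht]
    simp [hΦ, this]
  set F : DS → DS := fun x => if x ∈ LL then rho (kL x.1.2) else if x ∈ RR then lam (kR x.1.2)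
    else psi (Φ x.1.1.toReal) with hF
  have hFL : ∀ x ∈ LL, F x = rho (kL x.1.2) := fun x hx => if_pos hx
  have hFR : ∀ x ∈ RR, F x = lam (kR x.1.2) := fun x hx => by
    simp only [hF]
    rw [if_neg fun h => disjoint_left.1 LR_disj h hx, if_pos hx]
  have hFJ : ∀ x ∈ JJ, F x = psi (Φ x.1.1.toReal) := fun x hx => by
    simp only [hF]
    rw [if_neg fun h => disjoint_left.1 LJ_disj h hx,
      if_neg fun h => disjoint_left.1 RJ_disj h hx]
  refine ⟨F, ?_, hFL, hFR⟩
  rw [continuous_iff_continuousAt]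
  intro x
  rcases DS_cases x with hx | hx | hx
  · have hx0 : x.1.1 = ⊥ := hx
    have hnhds : ∀ c : ℝ, ∀ᶠ y : DS in 𝓝 x, y.1.1 < (c : EReal) := fun c =>
      (isOpen_Iio.preimage fst_continuous).mem_nhds (by simp [hx0])
    rw [ContinuousAt, tendsto_subtype_rng, hFL x hx]
    apply Filter.Tendsto.prodMk_nhds (x := (⊤ : EReal)) (y := (rho (kL x.1.2)).1.2)
    · rw [EReal.tendsto_nhds_top_iff_real]
      intro c
      filter_upwards [hnhds (min 0 (-c - CL))] with y hy
      rcases DS_cases y with h | h | h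
      · rw [hFL y h]; exact EReal.coe_lt_top c
      · obtain ⟨t, ht⟩ := mem_Ioo_bot_top.1 h
        rw [ht, EReal.coe_lt_coe_iff, lt_min_iff] at hy
        rw [hFJ y h, ht, EReal.toReal_coe, hΦL t hy.1.le]
        refine EReal.coe_lt_coe_iff.2 ?_
        linarith [(abs_le.1 (hCL t)).2]
      · have h : y.1.1 = ⊤ := h
        rw [h] at hy; simp at hy
    · have hev : (fun y => (F y).1.2) =ᶠ[𝓝 x] fun y => kL y.1.2 := by
        filter_upwards [hnhds 0] with y hy
        rcases DS_cases y with h | h | h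
        · rw [hFL y h, rho_snd (hkLm _)]
        · obtain ⟨t, ht⟩ := mem_Ioo_bot_top.1 h
          rw [ht, EReal.coe_lt_coe_iff] at hy
          rw [hFJ y h, ht, EReal.toReal_coe, hΦL t hy.le, DS_snd ht, ← htL, ← tri_neg]
          rfl
        · have h : y.1.1 = ⊤ := h
          rw [h] at hy; simp at hy
      rw [rho_snd (hkLm _)]
      exact ((hkL.comp snd_continuous).tendsto x).congr' hev.symm
  · have hev : F =ᶠ[𝓝 x] fun y => psi (Φ y.1.1.toReal) := by
      filter_upwards [JJ_isOpen.mem_nhds hx] with y hy using hFJ y hy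
    refine ContinuousAt.congr ?_ hev.symm
    have h1 : ContinuousAt (fun y : DS => y.1.1.toReal) x :=
      (toReal_continuousOn.comp (fst_continuous.continuousOn (s := JJ))
        fun _ h => h).continuousAt (JJ_isOpen.mem_nhds hx)
    exact (psi_continuous.comp hΦc).continuousAt.comp h1
  · have hx0 : x.1.1 = ⊤ := hx
    have hnhds : ∀ c : ℝ, ∀ᶠ y : DS in 𝓝 x, (c : EReal) < y.1.1 := fun c =>
      (isOpen_Ioi.preimage fst_continuous).mem_nhds (by simp [hx0])
    rw [ContinuousAt, tendsto_subtype_rng, hFR x hx]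
    apply Filter.Tendsto.prodMk_nhds (x := (⊥ : EReal)) (y := (lam (kR x.1.2)).1.2)
    · rw [EReal.tendsto_nhds_bot_iff_real]
      intro c
      filter_upwards [hnhds (max 1 (-c + CR))] with y hy
      rcases DS_cases y with h | h | h
      · have h : y.1.1 = ⊥ := h
        rw [h] at hy; simp at hy
      · obtain ⟨t, ht⟩ := mem_Ioo_bot_top.1 h
        rw [ht, EReal.coe_lt_coe_iff, max_lt_iff] at hy
        rw [hFJ y h, ht, EReal.toReal_coe, hΦR t hy.1.le]
        refine EReal.coe_lt_coe_iff.2 ?_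
        linarith [(abs_le.1 (hCR t)).1]
      · rw [hFR y h]; exact EReal.bot_lt_coe c
    · have hev : (fun y => (F y).1.2) =ᶠ[𝓝 x] fun y => kR y.1.2 := by
        filter_upwards [hnhds 1] with y hy
        rcases DS_cases y with h | h | h
        · have h : y.1.1 = ⊥ := h
          rw [h] at hy; simp at hy
        · obtain ⟨t, ht⟩ := mem_Ioo_bot_top.1 h
          rw [ht, EReal.coe_lt_coe_iff] at hy
          rw [hFJ y h, ht, EReal.toReal_coe, hΦR t hy.le, DS_snd ht, ← htR, ← tri_neg]
          rfl
        · rw [hFR y h, lam_snd (hkRm _)]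
      rw [lam_snd (hkRm _)]
      exact ((hkR.comp snd_continuous).tendsto x).congr' hev.symm

theorem exists_gap {K : Set ℝ} (hK : IsClosed K) (h : ¬ Icc 0 π ⊆ K) :
    ∃ p q, 0 < p ∧ p < q ∧ q < π ∧ Disjoint (Icc p q) K := by
  have h' : ¬ Ioo 0 π ⊆ K := fun h' => h (by
    rw [← closure_Ioo pi_pos.ne]; exact closure_minimal h' hK)
  obtain ⟨x, hx, hxK⟩ := not_subset.1 h'
  have : Ioo 0 π ∩ Kᶜ ∈ 𝓝 x := (isOpen_Ioo.inter hK.isOpen_compl).mem_nhds ⟨hx, hxK⟩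
  obtain ⟨ε, hε, hsub⟩ := Metric.nhds_basis_closedBall.mem_iff.1 this
  rw [Real.closedBall_eq_Icc] at hsub
  have hp := hsub (left_mem_Icc.2 (by linarith))
  have hq := hsub (right_mem_Icc.2 (by linarith))
  exact ⟨x - ε, x + ε, hp.1.1, by linarith, hq.1.2,
    disjoint_left.2 fun y hy => (hsub hy).2⟩

/-- A minimal set cannot contain an arc carried into itself by the second iterate: the second
iterate has a fixed point on the arc, so the minimal set would have at most two points. -/
theorem arc_not_subset {Y : Type*} [TopologicalSpace Y] [T1Space Y] {f : Y → Y} {M : Set Y}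
    (hmin : MinimalSystemOn f M) {α : ℝ → Y} (hinj : InjOn α (Icc 0 π)) {τ : ℝ → ℝ}
    (hτ : Continuous τ) (hτm : ∀ y, τ y ∈ Icc 0 π) (h : ∀ y, f (f (α y)) = α (τ y)) :
    ¬ ∀ y ∈ Icc 0 π, α y ∈ M := by
  intro hM
  have hπ := pi_pos
  obtain ⟨y, hy, hfix⟩ := exists_mem_Icc_isFixedPt_of_mapsTo hτ.continuousOn hπ.le
    fun y _ => hτm y
  have hyM := hM y hy
  have hNM := hmin.2.2 {α y, f (α y)}
    (by
      rintro x (rfl | rfl)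
      exacts [hyM, hmin.2.1.subset (mem_image_of_mem f hyM)])
    (insert_nonempty _ _) (toFinite _).isClosed (by
      rintro _ ⟨x, rfl | rfl, rfl⟩
      · exact Or.inr rfl
      · rw [h, hfix]; exact Or.inl rfl)
  have h0 : (0 : ℝ) ∈ Icc 0 π := ⟨le_rfl, hπ.le⟩
  have h1 : π / 2 ∈ Icc 0 π := ⟨by linarith, by linarith⟩
  have h2 : π ∈ Icc 0 π := ⟨hπ.le, le_rfl⟩
  have d01 : α 0 ≠ α (π / 2) := fun e => by have := hinj h0 h1 e; linarith
  have d02 : α 0 ≠ α π := fun e => by have := hinj h0 h2 e; linarith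
  have d12 : α (π / 2) ≠ α π := fun e => by have := hinj h1 h2 e; linarith
  have m0 := hNM.symm.subset (hM 0 h0)
  have m1 := hNM.symm.subset (hM _ h1)
  have m2 := hNM.symm.subset (hM π h2)
  simp only [mem_insert_iff, mem_singleton_iff] at m0 m1 m2
  grind

theorem nonempty_of_mk_eq {X : Type*} {A B : Set X} (h : Cardinal.mk A = Cardinal.mk B)
    (hA : A.Nonempty) : B.Nonempty := by
  obtain ⟨e⟩ := Cardinal.eq.1 h
  obtain ⟨a, ha⟩ := hA
  exact ⟨_, (e ⟨a, ha⟩).2⟩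

theorem mstar_nonempty {M : Set DS} (h : M ∈ MStarIn LL RR) :
    (M ∩ LL).Nonempty ∧ (M ∩ RR).Nonempty := by
  obtain ⟨-, hMLR, ⟨x, hx⟩, -⟩ := msetIn_data h.1
  rcases hMLR hx with hx' | hx'
  · exact ⟨⟨x, hx, hx'⟩, nonempty_of_mk_eq h.2 ⟨x, hx, hx'⟩⟩
  · exact ⟨nonempty_of_mk_eq h.2.symm ⟨x, hx, hx'⟩, ⟨x, hx, hx'⟩⟩

theorem mspace_of_mstar : MStarIn LL RR ⊆ MSpace DS := by
  intro M h
  obtain ⟨⟨a, haM, haL⟩, ⟨b, hbM, hbR⟩⟩ := mstar_nonempty h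
  obtain ⟨hM, hMLR, -, f, hf, hmin⟩ := msetIn_data h.1
  have hMc := hM.isClosed
  have hM'c : IsClosed (Subtype.val ⁻¹' M : Set ↥(LL ∪ RR)) := hMc.preimage continuous_subtype_val
  set aL : ℝ → ↥(LL ∪ RR) := fun y => ⟨lam y, Or.inl (lam_mem y)⟩ with haL'
  set aR : ℝ → ↥(LL ∪ RR) := fun y => ⟨rho y, Or.inr (rho_mem y)⟩ with haR'
  have haLc : Continuous aL := lam_continuous.subtype_mk _
  have haRc : Continuous aR := rho_continuous.subtype_mk _
  -- by minimality `f` exchanges the two arcs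
  have hfL : ∀ y, (f (aL y)).1 ∈ RR := by
    rcases path_trichotomy (continuous_subtype_val.comp (hf.comp haLc)) with h | h | h
    · exfalso
      have := hmin.subset_of_mapsTo hM'c (LL_isClosed.preimage continuous_subtype_val)
        (A := Subtype.val ⁻¹' LL) (by
          rintro x ⟨-, hx⟩
          have : x = aL x.1.1.2 := Subtype.ext (DS_eq_lam hx)
          rw [this]; exact h _) ⟨⟨a, Or.inl haL⟩, haM, haL⟩
      exact disjoint_left.1 LR_disj
        (this (show (⟨b, Or.inr hbR⟩ : ↥(LL ∪ RR)) ∈ Subtype.val ⁻¹' M from hbM)) hbR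
    · rcases (f (aL 0)).2 with h' | h'
      · exact absurd (h 0) (disjoint_left.1 LJ_disj h')
      · exact absurd (h 0) (disjoint_left.1 RJ_disj h')
    · exact h
  have hfR : ∀ y, (f (aR y)).1 ∈ LL := by
    rcases path_trichotomy (continuous_subtype_val.comp (hf.comp haRc)) with h | h | h
    · exact h
    · rcases (f (aR 0)).2 with h' | h'
      · exact absurd (h 0) (disjoint_left.1 LJ_disj h')
      · exact absurd (h 0) (disjoint_left.1 RJ_disj h')
    · exfalso
      have := hmin.subset_of_mapsTo hM'c (RR_isClosed.preimage continuous_subtype_val)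
        (A := Subtype.val ⁻¹' RR) (by
          rintro x ⟨-, hx⟩
          have : x = aR x.1.1.2 := Subtype.ext (DS_eq_rho hx)
          rw [this]; exact h _) ⟨⟨b, Or.inr hbR⟩, hbM, hbR⟩
      exact disjoint_left.1 LR_disj haL
        (this (show (⟨a, Or.inl haL⟩ : ↥(LL ∪ RR)) ∈ Subtype.val ⁻¹' M from haM))
  set φL : ℝ → ℝ := fun y => (f (aL y)).1.1.2 with hφL
  set φR : ℝ → ℝ := fun y => (f (aR y)).1.1.2 with hφR
  have hφLc : Continuous φL := snd_continuous.comp (continuous_subtype_val.comp (hf.comp haLc))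
  have hφRc : Continuous φR := snd_continuous.comp (continuous_subtype_val.comp (hf.comp haRc))
  have hφLm : ∀ y, φL y ∈ Icc 0 π := fun y => (f (aL y)).1.2.1
  have hφRm : ∀ y, φR y ∈ Icc 0 π := fun y => (f (aR y)).1.2.1
  have eL : ∀ y, f (aL y) = aR (φL y) := fun y => Subtype.ext (DS_eq_rho (hfL y))
  have eR : ∀ y, f (aR y) = aL (φR y) := fun y => Subtype.ext (DS_eq_lam (hfR y))
  have injL : InjOn aL (Icc 0 π) := by
    intro y hy z hz e
    have := congrArg (fun x : ↥(LL ∪ RR) => x.1.1.2) e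
    simpa only [haL', lam_snd hy, lam_snd hz] using this
  have injR : InjOn aR (Icc 0 π) := by
    intro y hy z hz e
    have := congrArg (fun x : ↥(LL ∪ RR) => x.1.1.2) e
    simpa only [haR', rho_snd hy, rho_snd hz] using this
  obtain ⟨p, q, hp, hpq, hq, hd⟩ := exists_gap (hMc.preimage lam_continuous)
    (arc_not_subset hmin injL (hφRc.comp hφLc) (fun y => hφRm _) fun y => by rw [eL, eR]; rfl)
  obtain ⟨HL, kL, CL, hHL, hkL, hkLm, hkφL, hCL, htL⟩ :=
    exists_lift (hMc.preimage lam_continuous) hp hpq hq hd hφLc hφLm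
  obtain ⟨p, q, hp, hpq, hq, hd⟩ := exists_gap (hMc.preimage rho_continuous)
    (arc_not_subset hmin injR (hφLc.comp hφRc) (fun y => hφLm _) fun y => by rw [eR, eL]; rfl)
  obtain ⟨HR, kR, CR, hHR, hkR, hkRm, hkφR, hCR, htR⟩ :=
    exists_lift (hMc.preimage rho_continuous) hp hpq hq hd hφRc hφRm
  obtain ⟨F, hF, hFL, hFR⟩ := exists_swap_map hHL hHR hkL hkR hkLm hkRm hCL hCR htL htR
  refine mspace_of_mem hM hMLR hF ?_ hmin
  rintro ⟨z, hz | hz⟩ hzM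
  · have e := DS_eq_lam hz
    have hzM : z ∈ M := hzM
    have e' : (⟨z, Or.inl hz⟩ : ↥(LL ∪ RR)) = aL z.1.2 := Subtype.ext e
    rw [hFL z hz, hkφL z.1.2 (show lam z.1.2 ∈ M from e ▸ hzM), e', eL]
  · have e := DS_eq_rho hz
    have hzM : z ∈ M := hzM
    have e' : (⟨z, Or.inr hz⟩ : ↥(LL ∪ RR)) = aR z.1.2 := Subtype.ext e
    rw [hFR z hz, hkφR z.1.2 (show rho z.1.2 ∈ M from e ▸ hzM), e', eR]

theorem msetIn_disjoint {X : Type*} [TopologicalSpace X] {A B : Set X} (h : Disjoint A B) :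
    Disjoint (MSetIn A) (MSetIn B) := by
  refine disjoint_left.2 fun M hA hB => ?_
  obtain ⟨-, hMA, ⟨x, hx⟩, -⟩ := msetIn_data hA
  exact disjoint_left.1 h (hMA hx) ((msetIn_data hB).2.1 hx)

end DoubleSineCurve

/-- There is a continuum `X = L ∪ J ∪ R ∈ 𝒞` with `L, R` nondegenerate
disjoint arcs such that `𝓜(X) = 𝓜(J) ∪ 𝓜(L) ∪ 𝓜(R) ∪ 𝓜*(L;R)`, the four systems being
pairwise disjoint; in particular every `M ∈ 𝓜*(L;R)` is a minimal set on `X`. -/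
theorem stmt16 :
    ∃ (X : Type) (_ : TopologicalSpace X),
      CompactSpace X ∧ ConnectedSpace X ∧ TopologicalSpace.MetrizableSpace X ∧
      ∃ L J R : Set X, ClassC L J R ∧
        IsArc L ∧ IsArc R ∧ L.Nontrivial ∧ R.Nontrivial ∧ Disjoint L R ∧
        MSpace X = MSetIn J ∪ MSetIn L ∪ MSetIn R ∪ MStarIn L R ∧
        Disjoint (MSetIn J) (MSetIn L) ∧
        Disjoint (MSetIn J) (MSetIn R) ∧
        Disjoint (MSetIn J) (MStarIn L R) ∧
        Disjoint (MSetIn L) (MSetIn R) ∧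
        Disjoint (MSetIn L) (MStarIn L R) ∧
        Disjoint (MSetIn R) (MStarIn L R) ∧
        MStarIn L R ⊆ MSpace X := by
  refine ⟨DS, inferInstance, inferInstance, inferInstance, inferInstance, LL, JJ, RR, classC,
    LL_arc, RR_arc, LL_nontrivial, RR_nontrivial, LR_disj, ?_, msetIn_disjoint LJ_disj.symm,
    msetIn_disjoint RJ_disj.symm, ?_, msetIn_disjoint LR_disj, ?_, ?_, mspace_of_mstar⟩
  · refine mspace_subset.antisymm ?_
    exact union_subset (union_subset (union_subset mspace_of_JJ mspace_of_LL) mspace_of_RR)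
      mspace_of_mstar
  · exact (msetIn_disjoint (disjoint_union_right.2 ⟨LJ_disj.symm, RJ_disj.symm⟩)).mono_right
      fun _ h => h.1
  · refine disjoint_left.2 fun M hM h => ?_
    obtain ⟨x, hx, hxR⟩ := (mstar_nonempty h).2
    exact disjoint_left.1 LR_disj ((msetIn_data hM).2.1 hx) hxR
  · refine disjoint_left.2 fun M hM h => ?_
    obtain ⟨x, hx, hxL⟩ := (mstar_nonempty h).1
    exact disjoint_left.1 LR_disj hxL ((msetIn_data hM).2.1 hx)
end

section
/- There exists a continuum X = L ∪ J ∪ R in the class 𝒞 with L and R nondegenerate disjoint arcs such that 𝓜(X) = 𝓜(J) ∪ 𝓜(L) ∪ 𝓜(R), the three systems being pairwise disjoint; equivalently, for this X no minimal set on X intersects both L and R (i.e., no M ∈ 𝓜*(L;R) is a minimal set on X). -/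
/-!
The space is the closure, in the cylinder `[-∞, ∞] × ℝ`, of the graph of a function `g` on the
real line. To the left, `g` is `sin t`, which accumulates on the segment `L = {-∞} × [-1, 1]`; to
the right it is `(2 + cos t) sin (t ^ 2)`, which accumulates on `R = {∞} × [-3, 3]`. The graph
itself is the free interval `J`.

A path in the space cannot enter or leave `L` or `R`, because it would have to follow infinitely
many oscillations (`path_trichotomy`). So a continuous self-map `f` sends each of `L`, `J`, `R`
into one of the three. If `f` maps `J` into `L` or `R`, density of `J` puts every minimal set there.
If `f` maps `J` into itself, going through the possible images of `L` and `R` shows that a minimal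
set lies in one piece (`subset_piece`), unless `f` interchanges `L` and `R`.

The function `g` is chosen so that `f(J) ⊆ J` and `f(L) ⊆ R` are incompatible (`no_swap`). Near
`L` the ray is asymptotic to `t ↦ (-∞, sin t)`, so its image is asymptotic to a fixed
`2π`-periodic uniformly continuous motion in `R`, and at the same time runs along the graph out to
`∞`. Being periodic, the motion revisits heights close to `3` in every period, so in some
period the image must pass from one peak of the envelope `2 + cos t` to another. On the way it makes
a large number of oscillations of amplitude at least `1`, contradicting uniform continuity
(`no_periodic_follow`).

Conversely, a minimal set on a piece is minimal on the whole space because the segments are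
retracts and every compact subset of `J` lies in a retract contained in `J` (`mem_MSpace_iff`).
-/

open Set Topology

open Filter

namespace SwapFree

/-! ### The space -/

/-- The function whose graph is the free interval: the sinusoid `sin t` for `t ≤ 0`, and the
modulated sinusoid `(2 + cos t) sin (t ^ 2)` for `t ≥ 0`. -/
noncomputable def g (t : ℝ) : ℝ :=
  Real.sin (min t 0) + (2 + Real.cos t) * Real.sin ((max t 0) ^ 2)

lemma continuous_g : Continuous g := by unfold g; fun_prop

lemma g_of_nonpos {t : ℝ} (h : t ≤ 0) : g t = Real.sin t := by
  simp [g, min_eq_left h, max_eq_right h]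

lemma g_of_nonneg {t : ℝ} (h : 0 ≤ t) : g t = (2 + Real.cos t) * Real.sin (t ^ 2) := by
  simp [g, min_eq_right h, max_eq_left h]

lemma abs_g_le_three (t : ℝ) : |g t| ≤ 3 := by
  rcases le_total t 0 with h | h
  · rw [g_of_nonpos h]; exact (Real.abs_sin_le_one t).trans (by norm_num)
  · rw [g_of_nonneg h, abs_mul]
    have h1 : |2 + Real.cos t| ≤ 3 := by
      rw [abs_le]; constructor <;> linarith [Real.neg_one_le_cos t, Real.cos_le_one t]
    nlinarith [Real.abs_sin_le_one (t ^ 2), abs_nonneg (Real.sin (t ^ 2)),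
      abs_nonneg (2 + Real.cos t)]

/-- The closure in `[-∞, ∞] × ℝ` of the graph of `g`: the graph together with the vertical
segments `{-∞} × [-1, 1]` and `{∞} × [-3, 3]`. -/
def S : Set (EReal × ℝ) :=
  {p | (0 ≤ p.1 ∨ |p.2| ≤ 1) ∧ |p.2| ≤ 3 ∧ (p.1 = ⊥ ∨ p.1 = ⊤ ∨ p.2 = g p.1.toReal)}

lemma isClosed_S : IsClosed S := by
  have h1 : IsClosed {p : EReal × ℝ | 0 ≤ p.1 ∨ |p.2| ≤ 1} :=
    (isClosed_le continuous_const continuous_fst).union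
      (isClosed_le continuous_snd.abs continuous_const)
  have h2 : IsClosed {p : EReal × ℝ | |p.2| ≤ 3} :=
    isClosed_le continuous_snd.abs continuous_const
  have h3 : IsClosed {p : EReal × ℝ | p.1 = ⊥ ∨ p.1 = ⊤ ∨ p.2 = g p.1.toReal} := by
    rw [← isOpen_compl_iff]
    have hU : IsOpen {p : EReal × ℝ | p.1 ∈ ({⊥, ⊤}ᶜ : Set EReal)} :=
      (Set.toFinite ({⊥, ⊤} : Set EReal)).isClosed.isOpen_compl.preimage continuous_fst
    have hc : ContinuousOn (fun p : EReal × ℝ => p.2 - g p.1.toReal)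
        {p : EReal × ℝ | p.1 ∈ ({⊥, ⊤}ᶜ : Set EReal)} :=
      continuousOn_snd.sub (continuous_g.comp_continuousOn
        (EReal.continuousOn_toReal.comp continuousOn_fst (fun p hp => hp)))
    convert hc.isOpen_inter_preimage hU (isOpen_compl_singleton (x := (0 : ℝ))) using 1
    ext p
    simp [sub_eq_zero, and_assoc]
  exact h1.inter (h2.inter h3)

lemma isCompact_S : IsCompact S := by
  refine (isCompact_univ.prod (isCompact_Icc (a := (-3 : ℝ)) (b := 3))).of_isClosed_subset
    isClosed_S ?_
  intro p hp
  exact ⟨mem_univ _, abs_le.1 hp.2.1⟩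

instance : CompactSpace S := isCompact_iff_compactSpace.1 isCompact_S

/-- The parametrization of the graph of `g`. -/
noncomputable def jp (t : ℝ) : S := ⟨((t : EReal), g t), by
  refine ⟨?_, abs_g_le_three t, Or.inr (Or.inr (by simp))⟩
  rcases le_total t 0 with h | h
  · right
    change |g t| ≤ 1
    rw [g_of_nonpos h]; exact Real.abs_sin_le_one t
  · left; exact EReal.coe_nonneg.2 h⟩

/-- The point `(-∞, sin t)` of the left segment; the real parameter makes the segment the image
of a path `ℝ → S` to which the left ray is asymptotic. -/
noncomputable def lp (t : ℝ) : S := ⟨(⊥, Real.sin t),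
  Or.inr (Real.abs_sin_le_one t), (Real.abs_sin_le_one t).trans (by norm_num), Or.inl rfl⟩

/-- The point `(∞, 3 sin t)` of the right segment. -/
noncomputable def rp (t : ℝ) : S := ⟨(⊤, 3 * Real.sin t), Or.inl le_top, by
  change |3 * Real.sin t| ≤ 3
  rw [abs_mul]; norm_num; exact Real.abs_sin_le_one t, Or.inr (Or.inl rfl)⟩

lemma continuous_jp : Continuous jp :=
  Continuous.subtype_mk (continuous_coe_real_ereal.prodMk continuous_g) _

lemma continuous_lp : Continuous lp :=
  Continuous.subtype_mk (continuous_const.prodMk Real.continuous_sin) _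

lemma continuous_rp : Continuous rp :=
  Continuous.subtype_mk (continuous_const.prodMk (Real.continuous_sin.const_mul 3)) _

/-- The fibre over `-∞`. -/
def L : Set S := {p | p.1.1 = ⊥}

/-- The fibre over `∞`. -/
def R : Set S := {p | p.1.1 = ⊤}

/-- The graph of `g`, as the part of `S` with finite first coordinate. -/
def J : Set S := {p | p.1.1 ≠ ⊥ ∧ p.1.1 ≠ ⊤}

lemma mem_trichotomy (p : S) : p ∈ L ∨ p ∈ J ∨ p ∈ R := by
  change p.1.1 = ⊥ ∨ (p.1.1 ≠ ⊥ ∧ p.1.1 ≠ ⊤) ∨ p.1.1 = ⊤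
  tauto

lemma disjoint_L_J : Disjoint L J := disjoint_left.2 fun _ h h' => h'.1 h
lemma disjoint_R_J : Disjoint R J := disjoint_left.2 fun _ h h' => h'.2 h
lemma disjoint_L_R : Disjoint L R := disjoint_left.2 fun p (h : p.1.1 = ⊥) (h' : p.1.1 = ⊤) => by
  rw [h] at h'; exact bot_ne_top h'

lemma jp_mem (t : ℝ) : jp t ∈ J := ⟨EReal.coe_ne_bot t, EReal.coe_ne_top t⟩
lemma lp_mem (t : ℝ) : lp t ∈ L := rfl
lemma rp_mem (t : ℝ) : rp t ∈ R := rfl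

lemma eq_jp {p : S} (h : p ∈ J) : p = jp p.1.1.toReal := by
  have h3 : p.1.2 = g p.1.1.toReal := by
    rcases p.2.2.2 with h1 | h1 | h1
    · exact absurd h1 h.1
    · exact absurd h1 h.2
    · exact h1
  exact Subtype.ext (Prod.ext (EReal.coe_toReal h.2 h.1).symm h3)

lemma abs_le_one_of_mem_L {p : S} (h : p ∈ L) : |p.1.2| ≤ 1 := by
  rcases p.2.1 with h1 | h1
  · rw [show p.1.1 = ⊥ from h] at h1; simp at h1
  · exact h1

lemma eq_lp {p : S} (h : p ∈ L) : p = lp (Real.arcsin p.1.2) := by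
  have h1 := abs_le.1 (abs_le_one_of_mem_L h)
  exact Subtype.ext (Prod.ext h (Real.sin_arcsin h1.1 h1.2).symm)

lemma eq_rp {p : S} (h : p ∈ R) : p = rp (Real.arcsin (p.1.2 / 3)) := by
  have h1 := abs_le.1 p.2.2.1
  refine Subtype.ext (Prod.ext h ?_)
  change p.1.2 = 3 * Real.sin (Real.arcsin (p.1.2 / 3))
  rw [Real.sin_arcsin (by linarith) (by linarith)]; ring

/-! ### Oscillation -/

/-- An interval `[α, α + d]` with `α d ≥ π` contains a full period of `s ↦ sin (s ^ 2)`. -/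
lemma exists_sq_phase (θ : ℝ) {α d : ℝ} (hα : 0 < α) (hd : 0 < d) (h : Real.pi ≤ α * d) :
    ∃ s ∈ Icc α (α + d), Real.sin (s ^ 2) = Real.sin θ := by
  obtain ⟨n, ⟨h1, h2⟩, -⟩ := existsUnique_add_zsmul_mem_Ico Real.two_pi_pos θ (α ^ 2)
  have h0 : 0 ≤ θ + n • (2 * Real.pi) := (sq_nonneg α).trans h1
  refine ⟨√(θ + n • (2 * Real.pi)), ⟨Real.le_sqrt_of_sq_le h1, ?_⟩, ?_⟩
  · exact Real.sqrt_le_iff.2 ⟨by positivity, by nlinarith [sq_nonneg d]⟩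
  · rw [Real.sq_sqrt h0, zsmul_eq_mul, Real.sin_add_int_mul_two_pi]

/-- Far to the right, `g` takes values `≥ 1` and `≤ -1` in short intervals. -/
lemma exists_g_big {α d : ℝ} (hα : 0 < α) (hd : 0 < d) (h : Real.pi ≤ α * d) :
    ∃ a ∈ Icc α (α + d), ∃ b ∈ Icc α (α + d), 1 ≤ g a ∧ g b ≤ -1 := by
  obtain ⟨a, ha, ha'⟩ := exists_sq_phase (Real.pi / 2) hα hd h
  obtain ⟨b, hb, hb'⟩ := exists_sq_phase (-(Real.pi / 2)) hα hd h
  refine ⟨a, ha, b, hb, ?_, ?_⟩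
  · rw [g_of_nonneg (hα.le.trans ha.1), ha', Real.sin_pi_div_two]
    linarith [Real.neg_one_le_cos a]
  · rw [g_of_nonneg (hα.le.trans hb.1), hb', Real.sin_neg, Real.sin_pi_div_two]
    linarith [Real.neg_one_le_cos b]

/-- Every point of the left segment is a limit of points of the graph over `t → -∞`. -/
lemma exists_seq_lp (θ : ℝ) :
    ∃ u : ℕ → ℝ, Tendsto u atTop atBot ∧ Tendsto (fun n => g (u n)) atTop (𝓝 (Real.sin θ)) := by
  have hu : Tendsto (fun n : ℕ => θ - n * (2 * Real.pi)) atTop atBot := by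
    have : Tendsto (fun n : ℕ => (n : ℝ) * (2 * Real.pi)) atTop atTop :=
      tendsto_natCast_atTop_atTop.atTop_mul_const Real.two_pi_pos
    simpa [sub_eq_add_neg] using
      tendsto_atBot_add_const_left atTop θ (tendsto_neg_atTop_atBot.comp this)
  refine ⟨_, hu, ?_⟩
  refine (tendsto_congr' ?_).2 tendsto_const_nhds
  filter_upwards [hu.eventually_le_atBot 0] with n hn
  rw [g_of_nonpos hn, Real.sin_sub_nat_mul_two_pi]

/-- Every point of the right segment is a limit of points of the graph over `t → ∞`. -/
lemma exists_seq_rp (θ : ℝ) :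
    ∃ u : ℕ → ℝ, Tendsto u atTop atTop ∧
      Tendsto (fun n => g (u n)) atTop (𝓝 (3 * Real.sin θ)) := by
  -- In the short interval to the right of `2πm`, where the envelope is close to `3`, there is
  -- a point at which the fast oscillation has the prescribed phase.
  have key : ∀ n : ℕ, ∃ s ∈ Icc (((n : ℝ) + 1) * (2 * Real.pi))
      (((n : ℝ) + 1) * (2 * Real.pi) + 1 / ((n : ℝ) + 1)), Real.sin (s ^ 2) = Real.sin θ := by
    intro n
    have hn : (0 : ℝ) < (n : ℝ) + 1 := by positivity
    refine exists_sq_phase θ (by positivity) (by positivity) ?_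
    have : ((n : ℝ) + 1) * (2 * Real.pi) * (1 / ((n : ℝ) + 1)) = 2 * Real.pi := by field_simp
    rw [this]; linarith [Real.pi_pos]
  choose u hu hu' using key
  have h1 : Tendsto (fun n : ℕ => ((n : ℝ) + 1) * (2 * Real.pi)) atTop atTop :=
    (tendsto_atTop_add_const_right _ _ tendsto_natCast_atTop_atTop).atTop_mul_const
      Real.two_pi_pos
  have h2 : Tendsto u atTop atTop := tendsto_atTop_mono (fun n => (hu n).1) h1
  refine ⟨u, h2, ?_⟩
  have h3 : Tendsto (fun n : ℕ => u n - ((n : ℝ) + 1) * (2 * Real.pi)) atTop (𝓝 0) :=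
    squeeze_zero (fun n => sub_nonneg.2 (hu n).1) (fun n => by linarith [(hu n).2])
      tendsto_one_div_add_atTop_nhds_zero_nat
  have h4 : Tendsto (fun n : ℕ => Real.cos (u n)) atTop (𝓝 1) := by
    have := (Real.continuous_cos.tendsto 0).comp h3
    rw [Real.cos_zero] at this
    refine this.congr fun n => ?_
    have := Real.cos_sub_nat_mul_two_pi (u n) (n + 1)
    push_cast at this
    exact this
  have h5 : Tendsto (fun n : ℕ => (2 + Real.cos (u n)) * Real.sin θ) atTop
      (𝓝 (3 * Real.sin θ)) := by
    have := (h4.const_add 2).mul_const (Real.sin θ)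
    norm_num at this ⊢
    exact this
  refine h5.congr' ?_
  filter_upwards [h2.eventually_ge_atTop 0] with n hn
  rw [g_of_nonneg hn, hu']

lemma lp_mem_closure (θ : ℝ) : lp θ ∈ closure (jp '' Iic 0) := by
  obtain ⟨u, hu, hg⟩ := exists_seq_lp θ
  refine mem_closure_of_tendsto (f := fun n => jp (u n)) (b := atTop) ?_ ?_
  · exact tendsto_subtype_rng.2 ((EReal.tendsto_coe_nhds_bot_iff.2 hu).prodMk_nhds hg)
  · filter_upwards [hu.eventually_le_atBot 0] with n hn using ⟨_, hn, rfl⟩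

lemma rp_mem_closure (θ : ℝ) : rp θ ∈ closure (jp '' Ici 0) := by
  obtain ⟨u, hu, hg⟩ := exists_seq_rp θ
  refine mem_closure_of_tendsto (f := fun n => jp (u n)) (b := atTop) ?_ ?_
  · exact tendsto_subtype_rng.2 ((EReal.tendsto_coe_nhds_top_iff.2 hu).prodMk_nhds hg)
  · filter_upwards [hu.eventually_ge_atTop 0] with n hn using ⟨_, hn, rfl⟩

/-! ### Paths -/

/-- If `g` oscillates by at least `2` between `e` and any other extended real, then no path
can leave the fibre of `S` over `e`: it would have to follow the oscillations. -/
lemma isOpen_preimage_fibre {e : EReal}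
    (he : ∀ v : EReal, v ≠ e →
      ∃ a b : ℝ, (a : EReal) ∈ uIcc e v ∧ (b : EReal) ∈ uIcc e v ∧ 1 ≤ g a ∧ g b ≤ -1)
    {γ : ℝ → S} (hγ : Continuous γ) : IsOpen {t | (γ t).1.1 = e} := by
  have hc : Continuous fun t => (γ t).1.1 := continuous_fst.comp (continuous_subtype_val.comp hγ)
  have hy : Continuous fun t => (γ t).1.2 := continuous_snd.comp (continuous_subtype_val.comp hγ)
  rw [Metric.isOpen_iff]
  intro t₀ ht₀
  obtain ⟨δ, hδ, hδ'⟩ := Metric.continuous_iff.1 hy t₀ (1 / 2) (by norm_num)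
  refine ⟨δ, hδ, fun t₁ ht₁ => ?_⟩
  by_contra hne
  obtain ⟨a, b, ha, hb, hga, hgb⟩ := he _ hne
  have hconn : ((fun t => (γ t).1.1) '' Metric.ball t₀ δ).OrdConnected :=
    ((convex_ball t₀ δ).isPreconnected.image _ hc.continuousOn).ordConnected
  have hsub := hconn.uIcc_subset ⟨t₀, Metric.mem_ball_self hδ, ht₀⟩ ⟨t₁, ht₁, rfl⟩
  have key : ∀ x : ℝ, (x : EReal) ∈ uIcc e (γ t₁).1.1 → |g x - (γ t₀).1.2| < 1 / 2 := by
    intro x hx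
    obtain ⟨t, ht, htx⟩ := hsub hx
    change (γ t).1.1 = x at htx
    have hJ : γ t ∈ J :=
      ⟨by rw [htx]; exact EReal.coe_ne_bot x, by rw [htx]; exact EReal.coe_ne_top x⟩
    have h2 : (γ t).1.2 = g x := by
      have := congrArg (fun p : S => p.1.2) (eq_jp hJ)
      simpa [jp, htx] using this
    have := hδ' t ht
    rwa [Real.dist_eq, h2] at this
  have h1 := abs_lt.1 (key a ha)
  have h2 := abs_lt.1 (key b hb)
  linarith [h1.1, h1.2, h2.1, h2.2]

lemma exists_osc_bot (v : EReal) (hv : v ≠ ⊥) :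
    ∃ a b : ℝ, (a : EReal) ∈ uIcc ⊥ v ∧ (b : EReal) ∈ uIcc ⊥ v ∧ 1 ≤ g a ∧ g b ≤ -1 := by
  obtain ⟨r, -, hr⟩ := EReal.lt_iff_exists_real_btwn.1 (bot_lt_iff_ne_bot.2 hv)
  have key : ∀ θ : ℝ, ∃ a : ℝ, (a : EReal) ∈ uIcc ⊥ v ∧ g a = Real.sin θ := by
    intro θ
    obtain ⟨n, hn⟩ := exists_nat_ge (max (θ - r) θ / (2 * Real.pi))
    rw [div_le_iff₀ Real.two_pi_pos] at hn
    have h1 := (le_max_left _ _).trans hn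
    have h2 := (le_max_right _ _).trans hn
    refine ⟨θ - n * (2 * Real.pi), ?_, ?_⟩
    · rw [uIcc_of_le bot_le]
      exact ⟨bot_le, (EReal.coe_le_coe_iff.2 (by linarith)).trans hr.le⟩
    · rw [g_of_nonpos (by linarith), Real.sin_sub_nat_mul_two_pi]
  obtain ⟨a, ha, ha'⟩ := key (Real.pi / 2)
  obtain ⟨b, hb, hb'⟩ := key (-(Real.pi / 2))
  exact ⟨a, b, ha, hb, by simp [ha'], by simp [hb']⟩

lemma exists_osc_top (v : EReal) (hv : v ≠ ⊤) :
    ∃ a b : ℝ, (a : EReal) ∈ uIcc ⊤ v ∧ (b : EReal) ∈ uIcc ⊤ v ∧ 1 ≤ g a ∧ g b ≤ -1 := by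
  obtain ⟨r, hr, -⟩ := EReal.lt_iff_exists_real_btwn.1 (lt_top_iff_ne_top.2 hv)
  obtain ⟨a, ha, b, hb, hab⟩ := exists_g_big (α := max r 1) (d := Real.pi) (by positivity)
    Real.pi_pos (by nlinarith [le_max_right r 1, Real.pi_pos])
  refine ⟨a, b, ?_, ?_, hab⟩
  · rw [uIcc_of_ge le_top]
    exact ⟨hr.le.trans (EReal.coe_le_coe_iff.2 ((le_max_left _ _).trans ha.1)), le_top⟩
  · rw [uIcc_of_ge le_top]
    exact ⟨hr.le.trans (EReal.coe_le_coe_iff.2 ((le_max_left _ _).trans hb.1)), le_top⟩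

/-- The sets `L`, `J`, `R` are unions of path components. -/
lemma path_trichotomy {γ : ℝ → S} (hγ : Continuous γ) :
    (∀ t, γ t ∈ L) ∨ (∀ t, γ t ∈ J) ∨ (∀ t, γ t ∈ R) := by
  have hc : Continuous fun t => (γ t).1.1 := continuous_fst.comp (continuous_subtype_val.comp hγ)
  have key : ∀ e : EReal, IsOpen {t | (γ t).1.1 = e} →
      (∀ t, (γ t).1.1 = e) ∨ (∀ t, (γ t).1.1 ≠ e) := by
    intro e ho
    have hclopen : IsClopen {t | (γ t).1.1 = e} := ⟨isClosed_eq hc continuous_const, ho⟩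
    rcases isClopen_iff.1 hclopen with h | h
    · exact Or.inr fun t ht => (Set.ext_iff.1 h t).1 ht
    · exact Or.inl fun t => (Set.ext_iff.1 h t).2 trivial
  rcases key ⊥ (isOpen_preimage_fibre exists_osc_bot hγ) with h | h
  · exact Or.inl h
  rcases key ⊤ (isOpen_preimage_fibre exists_osc_top hγ) with h' | h'
  · exact Or.inr (Or.inr h')
  · exact Or.inr (Or.inl fun t => ⟨h t, h' t⟩)

lemma trichotomy_J {f : S → S} (hf : Continuous f) :
    MapsTo f J L ∨ MapsTo f J J ∨ MapsTo f J R := by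
  rcases path_trichotomy (hf.comp continuous_jp) with h | h | h
  · exact Or.inl fun p hp => by rw [eq_jp hp]; exact h _
  · exact Or.inr (Or.inl fun p hp => by rw [eq_jp hp]; exact h _)
  · exact Or.inr (Or.inr fun p hp => by rw [eq_jp hp]; exact h _)

lemma trichotomy_L {f : S → S} (hf : Continuous f) :
    MapsTo f L L ∨ MapsTo f L J ∨ MapsTo f L R := by
  rcases path_trichotomy (hf.comp continuous_lp) with h | h | h
  · exact Or.inl fun p hp => by rw [eq_lp hp]; exact h _
  · exact Or.inr (Or.inl fun p hp => by rw [eq_lp hp]; exact h _)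
  · exact Or.inr (Or.inr fun p hp => by rw [eq_lp hp]; exact h _)

lemma trichotomy_R {f : S → S} (hf : Continuous f) :
    MapsTo f R L ∨ MapsTo f R J ∨ MapsTo f R R := by
  rcases path_trichotomy (hf.comp continuous_rp) with h | h | h
  · exact Or.inl fun p hp => by rw [eq_rp hp]; exact h _
  · exact Or.inr (Or.inl fun p hp => by rw [eq_rp hp]; exact h _)
  · exact Or.inr (Or.inr fun p hp => by rw [eq_rp hp]; exact h _)

/-! ### No map sends the free interval to itself and the left segment to the right one -/

/-- As `t → -∞` the points `jp t` and `lp t` become arbitrarily close, and uniform continuity of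
`f` transfers this to their images. `EReal` carries no canonical metric, so one compatible with
its topology is chosen inside the proof and only topological consequences are recorded. -/
lemma tendsto_image_sub {f : S → S} (hf : Continuous f) :
    Tendsto (fun t => (f (jp t)).1.2 - (f (lp t)).1.2) atBot (𝓝 0) ∧
    ((∀ t, f (lp t) ∈ R) → Tendsto (fun t => (f (jp t)).1.1) atBot (𝓝 ⊤)) ∧
    UniformContinuous fun t => (f (lp t)).1.2 := by
  let _ : MetricSpace EReal := TopologicalSpace.metrizableSpaceMetric EReal
  have hd : Tendsto (fun t => dist (jp t) (lp t)) atBot (𝓝 0) := by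
    have h1 : Tendsto (fun t : ℝ => dist (t : EReal) ⊥) atBot (𝓝 0) :=
      tendsto_iff_dist_tendsto_zero.1 (EReal.tendsto_coe_nhds_bot_iff.2 tendsto_id)
    refine h1.congr' ?_
    filter_upwards [eventually_le_atBot 0] with t ht
    change _ = max (dist (t : EReal) ⊥) (dist (g t) (Real.sin t))
    rw [g_of_nonpos ht, dist_self, max_eq_left dist_nonneg]
  have huf : UniformContinuous f := CompactSpace.uniformContinuous_of_continuous hf
  have hd' : Tendsto (fun t => dist (f (jp t)) (f (lp t))) atBot (𝓝 0) := by
    have h1 : Tendsto (fun t => (jp t, lp t)) atBot (uniformity S) :=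
      tendsto_uniformity_iff_dist_tendsto_zero.2 hd
    have h2 : Tendsto (fun t => (f (jp t), f (lp t))) atBot (uniformity S) :=
      Tendsto.comp huf h1
    exact tendsto_uniformity_iff_dist_tendsto_zero.1 h2
  refine ⟨?_, fun hR => ?_, ?_⟩
  · refine squeeze_zero_norm (fun t => ?_) hd'
    exact le_max_right (dist (f (jp t)).1.1 (f (lp t)).1.1) (dist (f (jp t)).1.2 (f (lp t)).1.2)
  · refine tendsto_iff_dist_tendsto_zero.2 (squeeze_zero (fun _ => dist_nonneg) (fun t => ?_) hd')
    have := le_max_left (dist (f (jp t)).1.1 (f (lp t)).1.1)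
      (dist (f (jp t)).1.2 (f (lp t)).1.2)
    rw [show (f (lp t)).1.1 = ⊤ from hR t] at this
    refine this.trans_eq ?_
    rw [← show (f (lp t)).1.1 = ⊤ from hR t]
    rfl
  · have hl : UniformContinuous lp := by
      refine Metric.uniformContinuous_iff.2 fun ε hε => ?_
      have hs : UniformContinuous Real.sin := Real.lipschitzWith_sin.uniformContinuous
      obtain ⟨δ, hδ, h⟩ := Metric.uniformContinuous_iff.1 hs ε hε
      refine ⟨δ, hδ, fun a b hab => ?_⟩
      change max (dist (⊥ : EReal) ⊥) (dist (Real.sin a) (Real.sin b)) < ε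
      rw [dist_self]
      exact max_lt hε (h hab)
    exact uniformContinuous_snd.comp (uniformContinuous_subtype_val.comp (huf.comp hl))

/-- If `Φ → ∞` as `t → -∞`, then `g ∘ Φ` is not asymptotic to a uniformly continuous
`2π`-periodic function `h`: the function `g` only comes close to `3` near the points `2πk`, and
between two of these it makes a number of oscillations that grows with `k`, whereas `h` returns
close to its supremum after one period, during which it oscillates a bounded number of times. -/
lemma no_periodic_follow {Φ h : ℝ → ℝ} (hΦ : Continuous Φ) (hΦ' : Tendsto Φ atBot atTop)
    (hu : UniformContinuous h) (hp : ∀ t, ∀ n : ℕ, h (t - n * (2 * Real.pi)) = h t)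
    (hd : Tendsto (fun t => g (Φ t) - h t) atBot (𝓝 0)) : False := by
  have hpi := Real.pi_pos
  obtain ⟨δ, hδ, hδ'⟩ := Metric.uniformContinuous_iff.1 hu (1 / 10) (by norm_num)
  -- A period is cut into `M` pieces shorter than `δ`.
  obtain ⟨M, hM⟩ := exists_nat_gt (2 * Real.pi / δ)
  have hM0 : (0 : ℝ) < M := lt_of_le_of_lt (by positivity) hM
  have hη : 2 * Real.pi / M < δ := by
    rw [div_lt_iff₀ hM0]; rw [div_lt_iff₀ hδ] at hM; linarith
  -- Beyond `2 M`, intervals of length `2 / M` contain full oscillations of `g`.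
  obtain ⟨T, hT⟩ := eventually_atBot.1
    ((hd.eventually (Metric.ball_mem_nhds 0 (show (0 : ℝ) < 1 / 10 by norm_num))).and
      (hΦ'.eventually_ge_atTop (2 * M)))
  have hclose : ∀ t ≤ T, |g (Φ t) - h t| < 1 / 10 := fun t ht => by
    have := (hT t ht).1
    rwa [dist_zero_right, Real.norm_eq_abs] at this
  have hbig : ∀ t ≤ T, 2 * (M : ℝ) ≤ Φ t := fun t ht => (hT t ht).2
  -- A time at which `h` is close to its supremum.
  obtain ⟨τ, hτT, hτ⟩ : ∃ τ ≤ T, 14 / 5 < h τ := by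
    obtain ⟨u, hu1, hu2⟩ := exists_seq_rp (Real.pi / 2)
    rw [Real.sin_pi_div_two, mul_one] at hu2
    obtain ⟨n, hn1, hn2⟩ := ((hu1.eventually_ge_atTop (Φ T)).and
      (hu2.eventually (lt_mem_nhds (show (29 / 10 : ℝ) < 3 by norm_num)))).exists
    obtain ⟨s, hs1, hs2⟩ :=
      ((hΦ'.eventually_ge_atTop (u n)).and (eventually_le_atBot T)).exists
    obtain ⟨t, ht, htu⟩ := intermediate_value_Icc' hs2 hΦ.continuousOn ⟨hn1, hs1⟩
    refine ⟨t, ht.2, ?_⟩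
    have := abs_lt.1 (hclose t ht.2)
    rw [htu] at this
    linarith [this.2]
  have hτn : ∀ n : ℕ, τ - n * (2 * Real.pi) ≤ T := fun n => by
    have : 0 ≤ (n : ℝ) * (2 * Real.pi) := by positivity
    linarith
  -- At the times `τ - 2πn` the point `Φ` is near a peak, hence far from every `2πk + π`.
  have hfar : ∀ k n : ℕ, 1 ≤ |Φ (τ - n * (2 * Real.pi)) - (k * (2 * Real.pi) + Real.pi)| := by
    intro k n
    by_contra! hlt
    have h1 := abs_lt.1 (hclose _ (hτn n))
    rw [hp] at h1
    have h0 : 0 ≤ Φ (τ - n * (2 * Real.pi)) := by linarith [hbig _ (hτn n)]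
    rw [g_of_nonneg h0] at h1
    set x := Φ (τ - n * (2 * Real.pi)) with hx
    have hcos : Real.cos x ≤ 0 := by
      have e : Real.cos x = -Real.cos (x - (k * (2 * Real.pi) + Real.pi)) := by
        rw [show x - (k * (2 * Real.pi) + Real.pi) = (x - Real.pi) - k * (2 * Real.pi) by ring,
          Real.cos_sub_nat_mul_two_pi, Real.cos_sub_pi, neg_neg]
      rw [e, neg_nonpos]
      have := abs_lt.1 hlt
      exact Real.cos_nonneg_of_neg_pi_div_two_le_of_le (by linarith [Real.pi_gt_three])
        (by linarith [Real.pi_gt_three])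
    have : (2 + Real.cos x) * Real.sin (x ^ 2) ≤ 2 := by
      nlinarith [Real.sin_le_one (x ^ 2), Real.neg_one_le_cos x]
    linarith [h1.1]
  -- So during some period `Φ` moves by at least `2`.
  obtain ⟨n, hn⟩ : ∃ n : ℕ,
      2 ≤ Φ (τ - (n + 1 : ℕ) * (2 * Real.pi)) - Φ (τ - n * (2 * Real.pi)) := by
    obtain ⟨k, hk⟩ := exists_nat_ge (Φ τ / (2 * Real.pi))
    rw [div_le_iff₀ Real.two_pi_pos] at hk
    have hlim : Tendsto (fun n : ℕ => Φ (τ - n * (2 * Real.pi))) atTop atTop := by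
      refine hΦ'.comp ?_
      have : Tendsto (fun n : ℕ => (n : ℝ) * (2 * Real.pi)) atTop atTop :=
        tendsto_natCast_atTop_atTop.atTop_mul_const Real.two_pi_pos
      simpa [sub_eq_add_neg] using
        tendsto_atBot_add_const_left atTop τ (tendsto_neg_atTop_atBot.comp this)
    have hex : ∃ n : ℕ, (k : ℝ) * (2 * Real.pi) + Real.pi ≤ Φ (τ - n * (2 * Real.pi)) :=
      (hlim.eventually_ge_atTop _).exists
    classical
    obtain ⟨n, hn⟩ : ∃ n, Nat.find hex = n + 1 := by
      refine Nat.exists_eq_succ_of_ne_zero fun h0 => ?_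
      have := Nat.find_spec hex
      rw [h0] at this
      simp only [Nat.cast_zero, zero_mul, sub_zero] at this
      linarith
    have h1 := Nat.find_spec hex
    rw [hn] at h1
    have h2 := not_le.1 (Nat.find_min hex (m := n) (by omega))
    have f1 := hfar k (n + 1)
    have f2 := hfar k n
    rw [abs_of_nonneg (by linarith)] at f1
    rw [abs_of_neg (by linarith)] at f2
    exact ⟨n, by linarith⟩
  -- Hence on one of the `M` pieces it moves by at least `2 / M`.
  set A := τ - n * (2 * Real.pi) with hA
  have hAT : A ≤ T := hτn n
  obtain ⟨i, hi⟩ : ∃ i : ℕ, 2 / M ≤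
      Φ (A - (i + 1 : ℕ) * (2 * Real.pi / M)) - Φ (A - i * (2 * Real.pi / M)) := by
    by_contra! hlt
    have hsum : ∑ i ∈ Finset.range M,
        (Φ (A - (i + 1 : ℕ) * (2 * Real.pi / M)) - Φ (A - i * (2 * Real.pi / M)))
        < ∑ _i ∈ Finset.range M, (2 / M : ℝ) :=
      Finset.sum_lt_sum_of_nonempty
        (Finset.nonempty_range_iff.2 (by rintro rfl; simp at hM0)) fun i _ => hlt i
    rw [Finset.sum_range_sub (fun i : ℕ => Φ (A - i * (2 * Real.pi / M)))] at hsum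
    have e1 : A - M * (2 * Real.pi / M) = τ - (n + 1 : ℕ) * (2 * Real.pi) := by
      rw [mul_div_cancel₀ _ hM0.ne', hA]; push_cast; ring
    simp only [Finset.sum_const, Finset.card_range, nsmul_eq_mul, e1, Nat.cast_zero, zero_mul,
      sub_zero] at hsum
    rw [mul_div_cancel₀ _ hM0.ne'] at hsum
    linarith
  set b := A - i * (2 * Real.pi / M) with hb
  set a := A - (i + 1 : ℕ) * (2 * Real.pi / M) with ha
  have hη0 : 0 < 2 * Real.pi / M := by positivity
  have hba : b - a = 2 * Real.pi / M := by rw [ha, hb]; push_cast; ring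
  have hbT : b ≤ T := by
    have : 0 ≤ (i : ℝ) * (2 * Real.pi / M) := by positivity
    linarith
  have hα : 2 * (M : ℝ) ≤ Φ b := hbig b hbT
  obtain ⟨x, hx, y, hy, hxg, hyg⟩ := exists_g_big (α := Φ b) (d := 2 / M) (by linarith)
    (by positivity) (by
      have : 2 * (M : ℝ) * (2 / M) = 4 := by field_simp; norm_num
      have h3 : 2 * (M : ℝ) * (2 / M) ≤ Φ b * (2 / M) := by gcongr
      linarith [Real.pi_lt_four])
  have hsub : Icc (Φ b) (Φ b + 2 / M) ⊆ Φ '' Icc a b :=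
    (Icc_subset_Icc_right (by linarith)).trans
      (intermediate_value_Icc' (by linarith) hΦ.continuousOn)
  obtain ⟨s, hs, rfl⟩ := hsub hx
  obtain ⟨t, ht, rfl⟩ := hsub hy
  have h1 := abs_lt.1 (hclose s (hs.2.trans hbT))
  have h2 := abs_lt.1 (hclose t (ht.2.trans hbT))
  have h3 : dist s t < δ := by
    rw [Real.dist_eq, abs_lt]; constructor <;> linarith [hs.1, hs.2, ht.1, ht.2]
  have h4 := hδ' h3
  rw [Real.dist_eq, abs_lt] at h4
  linarith [h1.2, h2.1, h4.2]

lemma no_swap {f : S → S} (hf : Continuous f) (hJ : MapsTo f J J) (hL : MapsTo f L R) : False := by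
  obtain ⟨h1, h2, h3⟩ := tendsto_image_sub hf
  have h2 := h2 fun t => hL (lp_mem t)
  have hJt : ∀ t, f (jp t) ∈ J := fun t => hJ (jp_mem t)
  have hcoe : ∀ t, (((f (jp t)).1.1.toReal : ℝ) : EReal) = (f (jp t)).1.1 := fun t =>
    EReal.coe_toReal (hJt t).2 (hJt t).1
  refine no_periodic_follow (Φ := fun t => (f (jp t)).1.1.toReal) (h := fun t => (f (lp t)).1.2)
    ?_ ?_ h3 ?_ ?_
  · refine EReal.isEmbedding_coe.continuous_iff.2 ?_
    exact (continuous_fst.comp (continuous_subtype_val.comp (hf.comp continuous_jp))).congr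
      fun t => (hcoe t).symm
  · refine EReal.tendsto_coe_nhds_top_iff.1 (h2.congr fun t => (hcoe t).symm)
  · intro t n
    have : lp (t - n * (2 * Real.pi)) = lp t :=
      Subtype.ext (Prod.ext rfl (Real.sin_sub_nat_mul_two_pi t n))
    simp only [this]
  · refine h1.congr fun t => ?_
    have := congrArg (fun p : S => p.1.2) (eq_jp (hJt t))
    rw [show (f (jp t)).1.2 = g (f (jp t)).1.1.toReal from this]

/-! ### Minimal sets -/

lemma minimalSystemOn_image_iff {X : Type*} [TopologicalSpace X] [T2Space X] {Z : Set X}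
    {f' : Z → Z} {f : X → X} {M : Set Z} (hM : IsCompact M)
    (h : ∀ z ∈ M, f z = f' z) :
    MinimalSystemOn f' M ↔ MinimalSystemOn f (Subtype.val '' M) := by
  have himg : ∀ N ⊆ M, f '' (Subtype.val '' N) = Subtype.val '' (f' '' N) := by
    intro N hN
    rw [image_image, image_image]
    exact image_congr fun z hz => h z (hN hz)
  have hinj : Function.Injective (image (Subtype.val : Z → X)) :=
    image_injective.2 Subtype.val_injective
  constructor
  · rintro ⟨hne, him, hmin⟩
    refine ⟨hne.image _, by rw [himg M subset_rfl, him], ?_⟩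
    intro N hN hNne hNc hNf
    have hNv : Subtype.val '' (Subtype.val ⁻¹' N : Set Z) = N := by
      rw [Subtype.image_preimage_coe, inter_eq_right]
      intro x hx
      obtain ⟨z, -, rfl⟩ := hN hx
      exact z.2
    have hNM : (Subtype.val ⁻¹' N : Set Z) ⊆ M := by
      intro z hz
      obtain ⟨w, hw, hwz⟩ := hN hz
      rwa [← Subtype.ext hwz]
    rw [← hNv]
    congr 1
    refine hmin _ hNM ?_ (hNc.preimage continuous_subtype_val) ?_
    · rw [← image_nonempty (f := (Subtype.val : Z → X)), hNv]; exact hNne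
    · rw [← image_subset_image_iff Subtype.val_injective, ← himg _ hNM, hNv]; exact hNf
  · rintro ⟨hne, him, hmin⟩
    refine ⟨image_nonempty.1 hne, hinj (by rw [← himg M subset_rfl, him]), ?_⟩
    intro N hN hNne hNc hNf
    refine hinj (hmin _ (image_mono hN) (hNne.image _) ?_ ?_)
    · exact ((hM.of_isClosed_subset hNc hN).image continuous_subtype_val).isClosed
    · rw [himg N hN]; exact image_mono hNf

/-- If `M ⊆ Z` and some map of `X` into `Z` fixes `M` pointwise, then `M` is a minimal set on `X`
if and only if it is one on `Z`. -/
lemma mem_MSpace_iff {X : Type*} [TopologicalSpace X] [T2Space X] {Z M : Set X} (hMZ : M ⊆ Z)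
    {ρ : X → X} (hρ : Continuous ρ) (hρZ : ∀ x, ρ x ∈ Z) (hρM : ∀ x ∈ M, ρ x = x) :
    M ∈ MSpace X ↔ M ∈ MSetIn Z := by
  have hv : Subtype.val '' (Subtype.val ⁻¹' M : Set Z) = M := by
    rw [Subtype.image_preimage_coe, inter_eq_right.2 hMZ]
  constructor
  · rintro ⟨hMc, f, hf, hmin⟩
    have hc : IsCompact (Subtype.val ⁻¹' M : Set Z) := by
      rw [Subtype.isCompact_iff, hv]; exact hMc
    refine ⟨_, ⟨hc, fun z => ⟨ρ (f z), hρZ _⟩,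
      (hρ.comp (hf.comp continuous_subtype_val)).subtype_mk _, ?_⟩, hv.symm⟩
    rw [minimalSystemOn_image_iff hc (f := f), hv]
    · exact hmin
    · intro z hz
      have : f z ∈ M := by rw [← hmin.2.1]; exact ⟨z, hz, rfl⟩
      exact (hρM _ this).symm
  · rintro ⟨M', ⟨hc, f', hf', hmin⟩, rfl⟩
    refine ⟨hc.image continuous_subtype_val, fun x => (f' ⟨ρ x, hρZ x⟩ : X),
      continuous_subtype_val.comp (hf'.comp (hρ.subtype_mk _)), ?_⟩
    refine (minimalSystemOn_image_iff hc fun z hz => ?_).1 hmin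
    have : (⟨ρ z, hρZ z⟩ : Z) = z := Subtype.ext (hρM z ⟨z, hz, rfl⟩)
    rw [this]

lemma subset_of_mem_MSetIn {X : Type*} [TopologicalSpace X] {Z M : Set X} (h : M ∈ MSetIn Z) :
    M ⊆ Z ∧ M.Nonempty ∧ IsCompact M := by
  obtain ⟨M', ⟨hc, f, -, hne, -⟩, rfl⟩ := h
  exact ⟨Subtype.coe_image_subset _ _, hne.image _, hc.image continuous_subtype_val⟩

lemma disjoint_MSetIn {X : Type*} [TopologicalSpace X] {Y Z : Set X} (h : Disjoint Y Z) :
    Disjoint (MSetIn Y) (MSetIn Z) := by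
  refine disjoint_left.2 fun M hY hZ => ?_
  obtain ⟨hMY, ⟨x, hx⟩, -⟩ := subset_of_mem_MSetIn hY
  exact disjoint_left.1 h (hMY hx) ((subset_of_mem_MSetIn hZ).1 hx)

lemma isClosed_L : IsClosed L :=
  isClosed_eq (continuous_fst.comp continuous_subtype_val) continuous_const

lemma isClosed_R : IsClosed R :=
  isClosed_eq (continuous_fst.comp continuous_subtype_val) continuous_const

lemma isOpen_J : IsOpen J := by
  have : J = (L ∪ R)ᶜ := by
    ext p
    change (p.1.1 ≠ ⊥ ∧ p.1.1 ≠ ⊤) ↔ ¬ (p.1.1 = ⊥ ∨ p.1.1 = ⊤)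
    tauto
  rw [this]
  exact (isClosed_L.union isClosed_R).isOpen_compl

lemma dense_J : Dense J := by
  have hsub : ∀ s : Set ℝ, jp '' s ⊆ J := by
    rintro s _ ⟨t, -, rfl⟩; exact jp_mem t
  intro p
  rcases mem_trichotomy p with h | h | h
  · rw [eq_lp h]; exact closure_mono (hsub _) (lp_mem_closure _)
  · exact subset_closure h
  · rw [eq_rp h]; exact closure_mono (hsub _) (rp_mem_closure _)

/-- A minimal set meeting a closed invariant set lies inside it. -/
lemma MinimalSystemOn_subset {X : Type*} [TopologicalSpace X] {f : X → X} {M Z : Set X}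
    (h : MinimalSystemOn f M) (hM : IsClosed M) (hZ : IsClosed Z) (hf : MapsTo f Z Z)
    (hne : (M ∩ Z).Nonempty) : M ⊆ Z := by
  rw [← h.2.2 (M ∩ Z) inter_subset_left hne (hM.inter hZ)]
  · exact inter_subset_right
  · rintro _ ⟨x, hx, rfl⟩
    exact ⟨by rw [← h.2.1]; exact ⟨x, hx.1, rfl⟩, hf hx.2⟩

/-- Every minimal set lies in one of the three pieces. A continuous map sends each of `L`, `J`,
`R` into one of them; all combinations force this except `J → J`, `L → R`, `R → L`, and
`no_swap` excludes already `J → J`, `L → R`. -/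
lemma subset_piece {M : Set S} (hM : M ∈ MSpace S) : M ⊆ L ∨ M ⊆ J ∨ M ⊆ R := by
  obtain ⟨hMc, f, hf, hmin⟩ := hM
  have himg : ∀ Z : Set S, MapsTo f M Z → M ⊆ Z := fun Z h => by
    rw [← hmin.2.1]; exact h.image_subset
  have hdense : ∀ Z : Set S, IsClosed Z → MapsTo f J Z → M ⊆ Z := by
    intro Z hZ h
    refine himg Z fun p _ => ?_
    have := h.closure hf (dense_J p)
    rwa [hZ.closure_eq] at this
  have hmaps : ∀ p ∈ M, f p ∈ M := fun p hp => by rw [← hmin.2.1]; exact ⟨p, hp, rfl⟩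
  rcases trichotomy_J hf with hJ | hJ | hJ
  · exact Or.inl (hdense L isClosed_L hJ)
  · rcases trichotomy_L hf with hL | hL | hL
    · by_cases hne : (M ∩ L).Nonempty
      · exact Or.inl (MinimalSystemOn_subset hmin hMc.isClosed isClosed_L hL hne)
      have hnL : ∀ p ∈ M, p ∉ L := fun p hp hpL => hne ⟨p, hp, hpL⟩
      by_cases hne' : (M ∩ R).Nonempty
      · rcases trichotomy_R hf with hR | hR | hR
        · obtain ⟨p, hp, hpR⟩ := hne'
          exact absurd (hR hpR) (hnL _ (hmaps p hp))
        · refine Or.inr (Or.inl (himg J fun p hp => ?_))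
          rcases mem_trichotomy p with h | h | h
          · exact absurd h (hnL p hp)
          · exact hJ h
          · exact hR h
        · exact Or.inr (Or.inr (MinimalSystemOn_subset hmin hMc.isClosed isClosed_R hR hne'))
      · refine Or.inr (Or.inl fun p hp => ?_)
        rcases mem_trichotomy p with h | h | h
        · exact absurd h (hnL p hp)
        · exact h
        · exact absurd ⟨p, hp, h⟩ hne'
    · -- Here `L ∪ J` is mapped into `J`; unless `R` is invariant, `f ∘ f` maps everything
      -- into `J`.
      have hLJ : M ⊆ L ∪ J → M ⊆ J := fun h => himg J fun p hp => by
        rcases h hp with h | h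
        · exact hL h
        · exact hJ h
      have hnR : (∀ p ∈ M, p ∉ R) → M ⊆ L ∪ J := fun h p hp => by
        rcases mem_trichotomy p with h' | h' | h'
        · exact Or.inl h'
        · exact Or.inr h'
        · exact absurd h' (h p hp)
      by_cases hne' : (M ∩ R).Nonempty
      · have hgo : MapsTo f R (L ∪ J) → M ⊆ L ∪ J := fun h => himg _ fun p _ => by
          rcases mem_trichotomy p with h' | h' | h'
          · exact Or.inr (hL h')
          · exact Or.inr (hJ h')
          · exact h h'
        rcases trichotomy_R hf with hR | hR | hR
        · exact Or.inr (Or.inl (hLJ (hgo fun p hp => Or.inl (hR hp))))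
        · exact Or.inr (Or.inl (hLJ (hgo fun p hp => Or.inr (hR hp))))
        · exact Or.inr (Or.inr (MinimalSystemOn_subset hmin hMc.isClosed isClosed_R hR hne'))
      · exact Or.inr (Or.inl (hLJ (hnR fun p hp h => hne' ⟨p, hp, h⟩)))
    · exact (no_swap hf hJ hL).elim
  · exact Or.inr (Or.inr (hdense R isClosed_R hJ))

/-! ### Retractions onto the pieces -/

lemma mem_MSpace_iff_L {M : Set S} (h : M ⊆ L) : M ∈ MSpace S ↔ M ∈ MSetIn L := by
  have hb : ∀ y : ℝ, |max (-1) (min 1 y)| ≤ 1 := fun y =>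
    abs_le.2 ⟨le_max_left _ _, max_le (by norm_num) (min_le_left _ _)⟩
  refine mem_MSpace_iff h (ρ := fun p => ⟨(⊥, max (-1) (min 1 p.1.2)),
    Or.inr (hb _), (hb _).trans (by norm_num), Or.inl rfl⟩) ?_ (fun _ => rfl) ?_
  · exact Continuous.subtype_mk (continuous_const.prodMk (continuous_const.max
      (continuous_const.min (continuous_snd.comp continuous_subtype_val)))) _
  · intro p hp
    have h1 := abs_le.1 (abs_le_one_of_mem_L (h hp))
    refine Subtype.ext (Prod.ext (h hp).symm ?_)
    change max (-1) (min 1 p.1.2) = p.1.2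
    rw [min_eq_right h1.2, max_eq_right h1.1]

lemma mem_MSpace_iff_R {M : Set S} (h : M ⊆ R) : M ∈ MSpace S ↔ M ∈ MSetIn R := by
  refine mem_MSpace_iff h (ρ := fun p => ⟨(⊤, p.1.2), Or.inl le_top, p.2.2.1,
    Or.inr (Or.inl rfl)⟩) ?_ (fun _ => rfl) ?_
  · exact Continuous.subtype_mk
      (continuous_const.prodMk (continuous_snd.comp continuous_subtype_val)) _
  · intro p hp
    exact Subtype.ext (Prod.ext (h hp).symm rfl)

lemma isEmbedding_jp : IsEmbedding jp :=
  IsEmbedding.of_comp continuous_jp (continuous_fst.comp continuous_subtype_val)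
    EReal.isEmbedding_coe

lemma range_jp : range jp = J := by
  ext p
  constructor
  · rintro ⟨t, rfl⟩; exact jp_mem t
  · intro h; exact ⟨_, (eq_jp h).symm⟩

/-- A compact subset of `J` lies over some `[-c, c]`, and clamping the first coordinate to
`[-c, c]` gives a retraction onto the graph over `[-c, c]`. -/
lemma mem_MSpace_iff_J {M : Set S} (h : M ⊆ J) (hM : IsCompact M) :
    M ∈ MSpace S ↔ M ∈ MSetIn J := by
  have hpre : IsCompact (jp ⁻¹' M) := by
    rw [isEmbedding_jp.isCompact_iff, image_preimage_eq_inter_range, range_jp,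
      inter_eq_left.2 h]
    exact hM
  obtain ⟨c, hc⟩ := hpre.isBounded.exists_norm_le
  have hcl : Continuous fun x : EReal => max ((-|c| : ℝ) : EReal) (min ((|c| : ℝ) : EReal) x) :=
    continuous_const.max (continuous_const.min continuous_id)
  have hb : ∀ x : EReal, max ((-|c| : ℝ) : EReal) (min ((|c| : ℝ) : EReal) x) ∈
      ({⊥, ⊤}ᶜ : Set EReal) := by
    intro x
    simp only [mem_compl_iff, mem_insert_iff, mem_singleton_iff, not_or]
    constructor
    · exact ne_of_gt ((EReal.bot_lt_coe _).trans_le (le_max_left _ _))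
    · refine ne_of_lt (max_lt (EReal.coe_lt_top _) ((min_le_left _ _).trans_lt
        (EReal.coe_lt_top _)))
  refine mem_MSpace_iff h
    (ρ := fun p => jp (max ((-|c| : ℝ) : EReal) (min ((|c| : ℝ) : EReal) p.1.1)).toReal)
    ?_ (fun _ => jp_mem _) ?_
  · exact continuous_jp.comp ((EReal.continuousOn_toReal.comp_continuous hcl hb).comp
      (continuous_fst.comp continuous_subtype_val))
  · intro p hp
    have hpJ := eq_jp (h hp)
    have h1 : ‖p.1.1.toReal‖ ≤ c := hc _ (by rw [mem_preimage, ← hpJ]; exact hp)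
    have h2 := abs_le.1 (h1.trans (le_abs_self c))
    have h3 : ((p.1.1.toReal : ℝ) : EReal) = p.1.1 := EReal.coe_toReal (h hp).2 (h hp).1
    have h4 : max ((-|c| : ℝ) : EReal) (min ((|c| : ℝ) : EReal) p.1.1) = p.1.1 := by
      rw [← h3, min_eq_right (EReal.coe_le_coe_iff.2 h2.2),
        max_eq_right (EReal.coe_le_coe_iff.2 h2.1)]
    rw [h4]
    exact hpJ.symm

/-! ### Membership in the class `𝒞` -/

lemma isArc_L : IsArc L := by
  have e : L ≃ₜ Icc (-1 : ℝ) 1 :=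
    { toFun := fun p => ⟨p.1.1.2, abs_le.1 (abs_le_one_of_mem_L p.2)⟩
      invFun := fun y => ⟨⟨(⊥, y.1), Or.inr (abs_le.2 y.2),
        (abs_le.2 y.2).trans (by norm_num), Or.inl rfl⟩, rfl⟩
      left_inv := fun p => Subtype.ext (Subtype.ext (Prod.ext (Eq.symm p.2) rfl))
      right_inv := fun y => rfl
      continuous_toFun := Continuous.subtype_mk
        (continuous_snd.comp (continuous_subtype_val.comp continuous_subtype_val)) _
      continuous_invFun := Continuous.subtype_mk (Continuous.subtype_mk
        (continuous_const.prodMk continuous_subtype_val) _) _ }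
  exact ⟨e.trans (iccHomeoI (-1) 1 (by norm_num))⟩

lemma isArc_R : IsArc R := by
  have e : R ≃ₜ Icc (-3 : ℝ) 3 :=
    { toFun := fun p => ⟨p.1.1.2, abs_le.1 p.1.2.2.1⟩
      invFun := fun y => ⟨⟨(⊤, y.1), Or.inl le_top, abs_le.2 y.2, Or.inr (Or.inl rfl)⟩, rfl⟩
      left_inv := fun p => Subtype.ext (Subtype.ext (Prod.ext (Eq.symm p.2) rfl))
      right_inv := fun y => rfl
      continuous_toFun := Continuous.subtype_mk
        (continuous_snd.comp (continuous_subtype_val.comp continuous_subtype_val)) _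
      continuous_invFun := Continuous.subtype_mk (Continuous.subtype_mk
        (continuous_const.prodMk continuous_subtype_val) _) _ }
  exact ⟨e.trans (iccHomeoI (-3) 3 (by norm_num))⟩

/-- `[0, 1]` is a quotient of the locally connected space `ℝ`. -/
lemma locallyConnectedSpace_of_isArc {X : Type*} [TopologicalSpace X] {A : Set X}
    (h : IsArc A) : LocallyConnectedSpace A := by
  obtain ⟨e⟩ := h
  have hq : IsQuotientMap (projIcc (0 : ℝ) 1 zero_le_one) :=
    IsQuotientMap.of_comp continuous_subtype_val continuous_projIcc
      (by convert IsQuotientMap.id (X := Icc (0 : ℝ) 1) using 1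
          funext x; exact projIcc_val zero_le_one x)
  have : LocallyConnectedSpace (Icc (0 : ℝ) 1) := hq.isCoinducing.locallyConnectedSpace
  exact e.locallyConnectedSpace

lemma isRaySet_image {s : Set ℝ} (e : s ≃ₜ Ici (0 : ℝ)) : IsRaySet (jp '' s) :=
  ⟨(isEmbedding_jp.homeomorphImage s).symm.trans e⟩

lemma classC : ClassC L J R where
  union_eq := by
    ext p
    have := mem_trichotomy p
    simp only [mem_union, mem_univ, iff_true]
    tauto
  openJ := isOpen_J
  freeJ := by
    have hs : IsEmbedding Real.sigmoid :=
      Real.sigmoid_strictMono.isEmbedding_of_ordConnected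
        (by rw [Real.range_sigmoid]; exact ordConnected_Ioo)
    exact ⟨(Homeomorph.setCongr range_jp).symm.trans (isEmbedding_jp.toHomeomorph.symm.trans
      (hs.toHomeomorph.trans (Homeomorph.setCongr Real.range_sigmoid)))⟩
  denseJ := dense_J
  compactL := isClosed_L.isCompact
  connL := by
    have : L = range lp := by
      ext p
      exact ⟨fun h => ⟨_, (eq_lp h).symm⟩, by rintro ⟨t, rfl⟩; exact lp_mem t⟩
    rw [this]; exact isConnected_range continuous_lp
  locConnL := locallyConnectedSpace_of_isArc isArc_L
  compactR := isClosed_R.isCompact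
  connR := by
    have : R = range rp := by
      ext p
      exact ⟨fun h => ⟨_, (eq_rp h).symm⟩, by rintro ⟨t, rfl⟩; exact rp_mem t⟩
    rw [this]; exact isConnected_range continuous_rp
  locConnR := locallyConnectedSpace_of_isArc isArc_R
  disjLJ := disjoint_L_J
  disjRJ := disjoint_R_J
  rays := by
    have hcont : Continuous fun p : S => p.1.1 := continuous_fst.comp continuous_subtype_val
    have e : Iic (0 : ℝ) ≃ₜ Ici (0 : ℝ) :=
      { toFun := fun x => ⟨-x.1, mem_Ici.2 (neg_nonneg.2 (mem_Iic.1 x.2))⟩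
        invFun := fun x => ⟨-x.1, mem_Iic.2 (neg_nonpos.2 (mem_Ici.1 x.2))⟩
        left_inv := fun x => Subtype.ext (neg_neg _)
        right_inv := fun x => Subtype.ext (neg_neg _)
        continuous_toFun := continuous_subtype_val.neg.subtype_mk _
        continuous_invFun := continuous_subtype_val.neg.subtype_mk _ }
    refine ⟨jp '' Iic 0, jp '' Ici 0, ?_, isRaySet_image e, isRaySet_image (Homeomorph.refl _),
      ?_, ?_, ?_, ?_⟩
    · rw [← image_union, Iic_union_Ici, image_univ, range_jp]
    · have : L ∪ jp '' Iic 0 = {p : S | p.1.1 ≤ 0} := by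
        ext p
        constructor
        · rintro (h | ⟨t, ht, rfl⟩)
          · change p.1.1 ≤ 0
            rw [show p.1.1 = ⊥ from h]; exact bot_le
          · exact EReal.coe_nonpos.2 ht
        · intro (h : p.1.1 ≤ 0)
          by_cases hb : p.1.1 = ⊥
          · exact Or.inl hb
          · have hJ : p ∈ J := ⟨hb, fun ht => by rw [ht] at h; simp at h⟩
            exact Or.inr ⟨_, EReal.toReal_nonpos h, (eq_jp hJ).symm⟩
      rw [this]
      exact (isClosed_le hcont continuous_const).isCompact
    · exact union_subset (fun p hp => by rw [eq_lp hp]; exact lp_mem_closure _) subset_closure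
    · have : R ∪ jp '' Ici 0 = {p : S | 0 ≤ p.1.1} := by
        ext p
        constructor
        · rintro (h | ⟨t, ht, rfl⟩)
          · change 0 ≤ p.1.1
            rw [show p.1.1 = ⊤ from h]; exact le_top
          · exact EReal.coe_nonneg.2 ht
        · intro (h : 0 ≤ p.1.1)
          by_cases hb : p.1.1 = ⊤
          · exact Or.inl hb
          · have hJ : p ∈ J := ⟨fun ht => by rw [ht] at h; simp at h, hb⟩
            exact Or.inr ⟨_, EReal.toReal_nonneg h, (eq_jp hJ).symm⟩
      rw [this]
      exact (isClosed_le continuous_const hcont).isCompact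
    · exact union_subset (fun p hp => by rw [eq_rp hp]; exact rp_mem_closure _) subset_closure

lemma connectedSpace_S : ConnectedSpace S := by
  have h : IsConnected (univ : Set S) := by
    rw [← dense_J.closure_eq, ← range_jp]
    exact (isConnected_range continuous_jp).closure
  exact connectedSpace_iff_univ.2 h

lemma MSpace_eq : MSpace S = MSetIn J ∪ MSetIn L ∪ MSetIn R := by
  ext M
  constructor
  · intro h
    rcases subset_piece h with h' | h' | h'
    · exact Or.inl (Or.inr ((mem_MSpace_iff_L h').1 h))
    · exact Or.inl (Or.inl ((mem_MSpace_iff_J h' h.1).1 h))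
    · exact Or.inr ((mem_MSpace_iff_R h').1 h)
  · rintro ((h | h) | h)
    · have h' := subset_of_mem_MSetIn h
      exact (mem_MSpace_iff_J h'.1 h'.2.2).2 h
    · exact (mem_MSpace_iff_L (subset_of_mem_MSetIn h).1).2 h
    · exact (mem_MSpace_iff_R (subset_of_mem_MSetIn h).1).2 h

/-- A minimal set lies in one piece, so its traces on `L` and `R` cannot be equipotent unless it
misses both. -/
lemma notMem_MSpace {M : Set S} (h : M ∈ MStarIn L R) : M ∉ MSpace S := by
  intro hM
  obtain ⟨hLR, hcard⟩ := h
  obtain ⟨hsub, ⟨x, hx⟩, -⟩ := subset_of_mem_MSetIn hLR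
  rcases subset_piece hM with h' | h' | h'
  · have h0 : M ∩ R = ∅ :=
      disjoint_iff_inter_eq_empty.1 (disjoint_L_R.mono_left h')
    rw [h0, Cardinal.mk_eq_zero (∅ : Set S), Cardinal.mk_eq_zero_iff] at hcard
    exact hcard.elim ⟨x, hx, h' hx⟩
  · rcases hsub hx with hx' | hx'
    · exact disjoint_left.1 disjoint_L_J hx' (h' hx)
    · exact disjoint_left.1 disjoint_R_J hx' (h' hx)
  · have h0 : M ∩ L = ∅ :=
      disjoint_iff_inter_eq_empty.1 (disjoint_L_R.symm.mono_left h')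
    rw [h0, Cardinal.mk_eq_zero (∅ : Set S), eq_comm, Cardinal.mk_eq_zero_iff] at hcard
    exact hcard.elim ⟨x, hx, h' hx⟩

lemma nontrivial_L : L.Nontrivial := by
  refine ⟨lp 0, lp_mem _, lp (Real.pi / 2), lp_mem _, fun h => ?_⟩
  have := congrArg (fun p : S => p.1.2) h
  simp [lp] at this

lemma nontrivial_R : R.Nontrivial := by
  refine ⟨rp 0, rp_mem _, rp (Real.pi / 2), rp_mem _, fun h => ?_⟩
  have := congrArg (fun p : S => p.1.2) h
  simp [rp] at this

end SwapFree

/-- There is a continuum `X = L ∪ J ∪ R ∈ 𝒞` with `L, R` nondegenerate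
disjoint arcs such that `𝓜(X) = 𝓜(J) ∪ 𝓜(L) ∪ 𝓜(R)`, the three systems being pairwise
disjoint; equivalently, no `M ∈ 𝓜*(L;R)` is a minimal set on `X`. -/
theorem stmt17 :
    ∃ (X : Type) (_ : TopologicalSpace X),
      CompactSpace X ∧ ConnectedSpace X ∧ TopologicalSpace.MetrizableSpace X ∧
      ∃ L J R : Set X, ClassC L J R ∧
        IsArc L ∧ IsArc R ∧ L.Nontrivial ∧ R.Nontrivial ∧ Disjoint L R ∧
        MSpace X = MSetIn J ∪ MSetIn L ∪ MSetIn R ∧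
        Disjoint (MSetIn J) (MSetIn L) ∧
        Disjoint (MSetIn J) (MSetIn R) ∧
        Disjoint (MSetIn L) (MSetIn R) ∧
        ∀ M ∈ MStarIn L R, M ∉ MSpace X := by
  exact ⟨SwapFree.S, inferInstance, inferInstance, SwapFree.connectedSpace_S, inferInstance,
    SwapFree.L, SwapFree.J, SwapFree.R, SwapFree.classC, SwapFree.isArc_L, SwapFree.isArc_R,
    SwapFree.nontrivial_L, SwapFree.nontrivial_R, SwapFree.disjoint_L_R, SwapFree.MSpace_eq,
    SwapFree.disjoint_MSetIn SwapFree.disjoint_L_J.symm,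
    SwapFree.disjoint_MSetIn SwapFree.disjoint_R_J.symm,
    SwapFree.disjoint_MSetIn SwapFree.disjoint_L_R,
    fun _ => SwapFree.notMem_MSpace⟩
end

section
/- Let TSC = {(x, sin(1/x)) : x ∈ (0,1]} ∪ ({0} × [−1,1]) ⊆ ℝ² be the topologist's sine curve, with L = {0} × [−1,1], R = {(1, sin 1)}, and J = {(x, sin(1/x)) : x ∈ (0,1)}. Then a set M ⊆ TSC belongs to 𝓜(TSC) if and only if either M ⊆ L and M is a nonempty finite set or a Cantor set, or M ⊆ J ∪ R = {(x, sin(1/x)) : x ∈ (0,1]} and M is a nonempty finite set or a Cantor set. -/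
/-!
The sine curve has two path components, the limit segment `L` and the graph part `J ∪ R`, and each
of them embeds in the line, by height and by abscissa respectively.

A continuous self-map of the curve sends each path component into one of the two. Together with the
density of the graph part this forces a minimal set into a single component
(`MinimalSystemOn.dichotomy`). A compact minimal system embedded in the line is then finite or a
Cantor set: a periodic point makes the system finite, an isolated point is periodic, and a
nondegenerate connected component `K` would satisfy `T^n K ⊆ K` for some `n ≥ 1`, so that the
intermediate value theorem yields a periodic point (`IsMinimalMap.totallyDisconnectedSpace`).

Conversely, a nonempty finite set carries a cyclic permutation, and a Cantor set carries an
odometer: by Brouwer's characterization (`nonempty_homeo_cantor`) it is homeomorphic to the `2`-adic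
integers, where `x ↦ x + 1` is minimal. If such a set lies in one path component, it lies on an arc,
and the Tietze theorem extends the minimal map to the whole curve with values in that arc
(`mem_MSpace_of_retract`).
-/

open Set Topology

/-- The free interval of the topologist's sine curve. -/
def tscJ : Set (ℝ × ℝ) := {p | ∃ x ∈ Set.Ioo (0:ℝ) 1, p = (x, Real.sin (1/x))}

/-- The left remainder (limit segment) of the topologist's sine curve. -/
def tscL : Set (ℝ × ℝ) := {0} ×ˢ Set.Icc (-1:ℝ) 1

/-- The right remainder (a singleton) of the topologist's sine curve. -/
def tscR : Set (ℝ × ℝ) := {((1:ℝ), Real.sin 1)}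

/-- The topologist's sine curve `{(x, sin(1/x)) : x ∈ (0,1]} ∪ ({0} × [-1,1])`. -/
def TSC : Set (ℝ × ℝ) :=
  {p | ∃ x ∈ Set.Ioc (0:ℝ) 1, p = (x, Real.sin (1/x))} ∪ ({0} ×ˢ Set.Icc (-1:ℝ) 1)

/-- A minimal continuous self-map of `X`: no proper nonempty closed subset is invariant. -/
structure IsMinimalMap {X : Type*} [TopologicalSpace X] (T : X → X) : Prop where
  cont : Continuous T
  eq_univ : ∀ N : Set X, IsClosed N → N.Nonempty → MapsTo T N N → N = univ

/-! ### Cantor spaces carry minimal maps -/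

section Brouwer

open TopologicalSpace

variable {X : Type*} [TopologicalSpace X]

/-- One step of the splitting scheme: a nonempty clopen set `P` is cut into two nonempty clopen
pieces, neither of which is divided by `C`. If `C` does not cut `P` itself, any proper nonempty
clopen part of `P` serves. -/
lemma exists_split [CompactSpace X] [T2Space X] [TotallyDisconnectedSpace X]
    (hX : NoIsolatedPoints X) (C P : Clopens X) (hP : (P : Set X).Nonempty) :
    ∃ Q : Clopens X, (Q : Set X).Nonempty ∧ ((P \ Q : Clopens X) : Set X).Nonempty ∧
      (Q : Set X) ⊆ P ∧
      ((Q : Set X) ⊆ C ∨ (Q : Set X) ⊆ (C : Set X)ᶜ) ∧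
      (((P \ Q : Clopens X) : Set X) ⊆ C ∨ ((P \ Q : Clopens X) : Set X) ⊆ (C : Set X)ᶜ) := by
  by_cases h : ((P : Set X) ∩ C).Nonempty ∧ ((P : Set X) \ C).Nonempty
  · refine ⟨P ⊓ C, by simpa using h.1, ?_, by simp, Or.inl (by simp), Or.inr ?_⟩
    · simpa [Set.sdiff_inter] using h.2
    · intro x hx
      simp at hx ⊢
      tauto
  · obtain ⟨x, hx⟩ := hP
    -- `P` is open and is not `{x}`, so it contains a second point `y`.
    have : ∃ y ∈ (P : Set X), y ≠ x := by
      by_contra! hc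
      exact hX x (by
        have : (P : Set X) = {x} := Set.Subset.antisymm (fun y hy => hc y hy) (by simpa using hx)
        exact this ▸ P.isClopen.isOpen)
    obtain ⟨y, hy, hyx⟩ := this
    obtain ⟨V, hV, hxV, hVP⟩ := compact_exists_isClopen_in_isOpen
      (P.isClopen.isOpen.sdiff (isClosed_singleton (x := y))) (x := x)
      ⟨hx, by simpa using hyx.symm⟩
    have hside : (P : Set X) ⊆ C ∨ (P : Set X) ⊆ (C : Set X)ᶜ := by
      by_contra! hc
      obtain ⟨h1, h2⟩ := hc
      rw [Set.not_subset] at h1 h2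
      obtain ⟨a, ha, ha'⟩ := h1
      obtain ⟨b, hb, hb'⟩ := h2
      exact h ⟨⟨b, hb, by simpa using hb'⟩, ⟨a, ha, ha'⟩⟩
    have hsub : ((P \ ⟨V, hV⟩ : Clopens X) : Set X) ⊆ P := by
      intro z hz; simp at hz; exact hz.1
    refine ⟨⟨V, hV⟩, ⟨x, hxV⟩, ⟨y, ?_⟩, fun z hz => (hVP hz).1, ?_, ?_⟩
    · simp only [Clopens.coe_sdiff, Clopens.coe_mk]
      exact ⟨hy, fun hyV => (hVP hyV).2 rfl⟩
    · exact hside.imp (fun h z hz => h (hVP hz).1) (fun h z hz => h (hVP hz).1)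
    · exact hside.imp hsub.trans hsub.trans

/-- One half of the clopen set `P`, where `S P` is the part selected by `true`. -/
def half (S : Clopens X → Clopens X) (P : Clopens X) (c : Bool) : Clopens X :=
  bif c then S P else P \ S P

/-- The `n`-th clopen set coded by the binary sequence `b` in the splitting scheme `S`. -/
def piece (S : ℕ → Clopens X → Clopens X) (b : ℕ → Bool) : ℕ → Clopens X
  | 0 => ⊤
  | n + 1 => half (S n) (piece S b n) (b n)

open Classical in
/-- The `n`-th clopen set of the splitting scheme `S` containing the point `x`. -/
noncomputable def cell (S : ℕ → Clopens X → Clopens X) (x : X) : ℕ → Clopens X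
  | 0 => ⊤
  | n + 1 => half (S n) (cell S x n) (decide (x ∈ S n (cell S x n)))

open Classical in
/-- The binary address of the point `x` in the splitting scheme `S`. -/
noncomputable def address (S : ℕ → Clopens X → Clopens X) (x : X) (n : ℕ) : Bool :=
  decide (x ∈ S n (cell S x n))

lemma cell_succ (S : ℕ → Clopens X → Clopens X) (x : X) (n : ℕ) :
    cell S x (n + 1) = half (S n) (cell S x n) (address S x n) := rfl

lemma mem_half (S : Clopens X → Clopens X) (P : Clopens X) (x : X) (hx : x ∈ P) (c : Bool) :
    x ∈ half S P c ↔ (c = true ↔ x ∈ S P) := by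
  have : x ∈ P \ S P ↔ x ∈ P ∧ x ∉ S P := by
    rw [← SetLike.mem_coe, Clopens.coe_sdiff]; rfl
  cases c <;> simp [half, this, hx]

lemma mem_cell (S : ℕ → Clopens X → Clopens X) (x : X) (n : ℕ) : x ∈ cell S x n := by
  induction n with
  | zero => trivial
  | succ n ih => rw [cell_succ, mem_half _ _ _ ih]; simp [address]

lemma cell_eq_piece (S : ℕ → Clopens X → Clopens X) (x : X) (n : ℕ) :
    cell S x n = piece S (address S x) n := by
  induction n with
  | zero => rfl
  | succ n ih => rw [cell_succ, piece, ih]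

lemma cell_locallyConstant (S : ℕ → Clopens X → Clopens X) (n : ℕ) (x : X) :
    ∀ᶠ y in 𝓝 x, cell S y n = cell S x n ∧ address S y n = address S x n := by
  have key : ∀ n, (∀ᶠ y in 𝓝 x, cell S y n = cell S x n) →
      ∀ᶠ y in 𝓝 x, cell S y n = cell S x n ∧ address S y n = address S x n := by
    intro n h
    by_cases hx : x ∈ S n (cell S x n)
    · filter_upwards [h, (S n (cell S x n)).isClopen.isOpen.mem_nhds hx] with y hy hy'
      have : y ∈ S n (cell S x n) := hy'
      simp [address, hy, hx, this]
    · filter_upwards [h, (S n (cell S x n)).isClopen.compl.isOpen.mem_nhds hx] with y hy hy'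
      have : y ∉ S n (cell S x n) := hy'
      simp [address, hy, hx, this]
  apply key
  induction n with
  | zero => exact Filter.Eventually.of_forall fun _ => rfl
  | succ n ih =>
    filter_upwards [key n ih] with y hy
    rw [cell_succ, cell_succ, hy.1, hy.2]

/-- Brouwer's theorem (the half needed here): a nonempty compact metrizable totally disconnected space
without isolated points is homeomorphic to the Cantor space. The homeomorphism is the address map of a splitting scheme
whose `n`-th step respects the `n`-th clopen set in a countable enumeration: clopen sets separate
points, so distinct points have distinct addresses, and compactness realizes every address. -/
theorem nonempty_homeo_cantor [CompactSpace X] [T2Space X] [SecondCountableTopology X]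
    [TotallyDisconnectedSpace X] [Nonempty X] (hX : NoIsolatedPoints X) :
    Nonempty (X ≃ₜ (ℕ → Bool)) := by
  have : Countable (Clopens X) := Clopens.countable_iff_secondCountable.2 inferInstance
  obtain ⟨C, hC⟩ := exists_surjective_nat (Clopens X)
  choose! S hS1 hS2 hS3 hS4 hS5 using fun n => exists_split hX (C n)
  have hne : ∀ b n, (piece S b n : Set X).Nonempty := by
    intro b n
    induction n with
    | zero => exact Set.univ_nonempty
    | succ n ih =>
      rw [piece]
      cases b n
      exacts [hS2 n _ ih, hS1 n _ ih]
  have hside : ∀ b n, (piece S b (n + 1) : Set X) ⊆ C n ∨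
      (piece S b (n + 1) : Set X) ⊆ (C n : Set X)ᶜ := by
    intro b n
    rw [piece]
    cases b n
    exacts [hS5 n _ (hne b n), hS4 n _ (hne b n)]
  have hanti : ∀ b n, (piece S b (n + 1) : Set X) ⊆ piece S b n := by
    intro b n
    rw [piece]
    cases b n
    · intro z hz
      simp only [half, cond_false, Clopens.coe_sdiff] at hz
      exact hz.1
    · exact hS3 n _ (hne b n)
  have hinj : Function.Injective (address S) := by
    intro x y hxy
    by_contra hne'
    obtain ⟨U, hU, hxU, hyU⟩ := exists_isClopen_of_totally_separated hne'
    obtain ⟨n, hn⟩ := hC ⟨U, hU⟩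
    have hx := mem_cell S x (n + 1)
    have hy := mem_cell S y (n + 1)
    rw [cell_eq_piece] at hx hy
    rw [← hxy] at hy
    have := hside (address S x) n
    rw [hn] at this
    rcases this with h | h
    · exact hyU (h hy)
    · exact h hx hxU
  have hsurj : Function.Surjective (address S) := by
    intro b
    obtain ⟨x, hx⟩ := IsCompact.nonempty_iInter_of_sequence_nonempty_isCompact_isClosed
      (fun n => (piece S b n : Set X)) (hanti b) (hne b) isClosed_univ.isCompact
      (fun n => (piece S b n).isClopen.isClosed)
    have hx' : ∀ n, x ∈ piece S b n := fun n => Set.mem_iInter.1 hx n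
    refine ⟨x, ?_⟩
    have key : ∀ n, cell S x n = piece S b n → address S x n = b n := by
      intro n hn
      have := hx' (n + 1)
      rw [piece, mem_half _ _ _ (hx' n)] at this
      rw [Bool.eq_iff_iff, this]
      simp [address, hn]
    have hcell : ∀ n, cell S x n = piece S b n := by
      intro n
      induction n with
      | zero => rfl
      | succ n ih => rw [cell_succ, piece, ih, key n ih]
    exact funext fun n => key n (hcell n)
  have hcont : Continuous (address S) := by
    refine continuous_pi fun n => ?_
    refine ((IsLocallyConstant.iff_eventually_eq _).2 fun x => ?_).continuous
    exact (cell_locallyConstant S n x).mono fun y hy => hy.2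
  exact ⟨Continuous.homeoOfEquivCompactToT2 (f := Equiv.ofBijective _ ⟨hinj, hsurj⟩) hcont⟩

end Brouwer

/-! ### Transport, rotations and odometers -/

lemma IsMinimalMap.of_homeo {X Y : Type*} [TopologicalSpace X] [TopologicalSpace Y]
    (e : X ≃ₜ Y) {T : Y → Y} (hT : IsMinimalMap T) : IsMinimalMap (e.symm ∘ T ∘ e) := by
  refine ⟨by have := hT.cont; fun_prop, fun N hN hne hm => ?_⟩
  have := hT.eq_univ (e.symm ⁻¹' N) (hN.preimage e.symm.continuous)
    (hne.preimage e.symm.surjective) (fun y hy => by simpa using hm hy)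
  ext x
  have hx : e x ∈ e.symm ⁻¹' N := this ▸ Set.mem_univ _
  simpa using hx

/-- Translation by `1` is minimal on a topological group in which the natural numbers are dense;
this covers finite cyclic rotations and the odometer. -/
lemma isMinimalMap_add_one {G : Type*} [TopologicalSpace G] [AddGroupWithOne G]
    [IsTopologicalAddGroup G]
    (hd : DenseRange (Nat.cast : ℕ → G)) : IsMinimalMap (fun x : G => x + 1) := by
  refine ⟨by fun_prop, fun N hN ⟨x, hx⟩ hm => ?_⟩
  have hmem : ∀ n : ℕ, x + n ∈ N := by
    intro n
    induction n with
    | zero => simpa using hx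
    | succ n ih => simpa [add_assoc] using hm ih
  have hd' : DenseRange (fun n : ℕ => x + n) :=
    (Homeomorph.addLeft x).surjective.denseRange.comp hd (Homeomorph.addLeft x).continuous
  refine Set.eq_univ_of_univ_subset ?_
  rw [← hd'.closure_range]
  exact closure_minimal (Set.range_subset_iff.2 hmem) hN

lemma exists_isMinimalMap_of_finite {X : Type*} [TopologicalSpace X] [T1Space X]
    [Finite X] [Nonempty X] : ∃ T : X → X, IsMinimalMap T := by
  have : NeZero (Nat.card X) := ⟨Nat.card_pos.ne'⟩
  let _ : TopologicalSpace (ZMod (Nat.card X)) := ⊥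
  have : DiscreteTopology (ZMod (Nat.card X)) := ⟨rfl⟩
  obtain ⟨e⟩ : Nonempty (X ≃ ZMod (Nat.card X)) := Finite.card_eq.1 (by simp)
  let e' : X ≃ₜ ZMod (Nat.card X) := ⟨e, continuous_of_discreteTopology,
    continuous_of_discreteTopology⟩
  exact ⟨_, IsMinimalMap.of_homeo e' (isMinimalMap_add_one
    (ZMod.natCast_zmod_surjective.denseRange))⟩

/-- A Cantor space carries a minimal map: it is homeomorphic to the `2`-adic integers,
on which `x ↦ x + 1` (the odometer) is minimal since `ℕ` is dense in `ℤ_[2]`. -/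
lemma exists_isMinimalMap_of_cantor {X : Type*} [TopologicalSpace X] [CompactSpace X] [T2Space X]
    [SecondCountableTopology X] [TotallyDisconnectedSpace X] [Nonempty X]
    (hX : NoIsolatedPoints X) : ∃ T : X → X, IsMinimalMap T := by
  have hZ : NoIsolatedPoints ℤ_[2] := by
    intro y hy
    -- the points `y + 2 ^ n` are different from `y` and converge to `y`
    have ht : Filter.Tendsto (fun n : ℕ => y + (2 : ℤ_[2]) ^ n) Filter.atTop (𝓝 y) := by
      have : Filter.Tendsto (fun n : ℕ => (2 : ℤ_[2]) ^ n) Filter.atTop (𝓝 0) :=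
        tendsto_pow_atTop_nhds_zero_of_norm_lt_one (by
          have h : ‖(2 : ℤ_[2])‖ = (2 : ℝ)⁻¹ := PadicInt.norm_p (p := 2)
          rw [h]; norm_num)
      simpa using this.const_add y
    obtain ⟨n, hn⟩ := (ht.eventually (hy.mem_nhds rfl)).exists
    have : (2 : ℤ_[2]) ^ n = 0 := add_eq_left.1 (show y + (2 : ℤ_[2]) ^ n = y from hn)
    exact pow_ne_zero n two_ne_zero this
  have : TotallyDisconnectedSpace ℤ_[2] := inferInstance
  have : SecondCountableTopology ℤ_[2] := inferInstance
  obtain ⟨e⟩ := nonempty_homeo_cantor hX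
  obtain ⟨e'⟩ := nonempty_homeo_cantor hZ
  exact ⟨_, IsMinimalMap.of_homeo (e.trans e'.symm)
    (isMinimalMap_add_one PadicInt.denseRange_natCast)⟩

/-! ### Compact minimal systems embedded in the line -/

section Structure

variable {X : Type*} [TopologicalSpace X] {T : X → X}

lemma IsMinimalMap.exists_iterate_mem (hT : IsMinimalMap T) {U : Set X} (hU : IsOpen U)
    (hne : U.Nonempty) (x : X) : ∃ n : ℕ, T^[n + 1] x ∈ U := by
  have h := hT.eq_univ (closure (Set.range fun n : ℕ => T^[n + 1] x)) isClosed_closure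
    (Set.range_nonempty _).closure
    (MapsTo.closure (by
      rintro _ ⟨n, rfl⟩
      exact ⟨n + 1, by simp only [Function.iterate_succ_apply']⟩) hT.cont)
  obtain ⟨_, hy, n, rfl⟩ := (dense_iff_closure_eq.2 h).inter_open_nonempty U hU hne
  exact ⟨n, hy⟩

lemma IsMinimalMap.finite_of_periodic [T1Space X] (hT : IsMinimalMap T) {x : X} {n : ℕ}
    (hx : T^[n + 1] x = x) : Finite X := by
  have hfin : ((fun k => T^[k] x) '' Set.Iic n).Finite := (Set.finite_Iic n).image _
  have h := hT.eq_univ _ hfin.isClosed ⟨x, 0, by simp, rfl⟩ (by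
    rintro _ ⟨k, hk, rfl⟩
    rcases (Set.mem_Iic.1 hk).eq_or_lt with rfl | hk
    · exact ⟨0, by simp, by rw [← Function.iterate_succ_apply' T, hx]; rfl⟩
    · exact ⟨k + 1, hk, Function.iterate_succ_apply' T k x⟩)
  rw [h] at hfin
  exact Set.finite_univ_iff.1 hfin

lemma IsMinimalMap.noIsolatedPoints [T1Space X] (hT : IsMinimalMap T) (hX : ¬ Finite X) :
    NoIsolatedPoints X := by
  intro y hy
  obtain ⟨n, hn⟩ := hT.exists_iterate_mem hy ⟨y, rfl⟩ y
  exact hX (hT.finite_of_periodic hn)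

/-- An infinite compact minimal system that embeds in the line is totally disconnected: a
nondegenerate component would be mapped into itself by some iterate, which would then have a
fixed point by the intermediate value theorem. -/
lemma IsMinimalMap.totallyDisconnectedSpace [CompactSpace X] [T1Space X] (hT : IsMinimalMap T)
    (hX : ¬ Finite X) {e : X → ℝ} (he : Continuous e) (hinj : Function.Injective e) :
    TotallyDisconnectedSpace X := by
  rw [totallyDisconnectedSpace_iff_connectedComponent_subsingleton]
  intro x₀ x hx y hy
  by_contra hne
  wlog hlt : e x < e y generalizing x y
  · exact this hy hx (Ne.symm hne) (lt_of_le_of_ne (not_lt.1 hlt) (hinj.ne (Ne.symm hne)))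
  set K := connectedComponent x₀ with hK
  have hKc : IsPreconnected K := isPreconnected_connectedComponent
  have hU : e ⁻¹' Set.Ioo (e x) (e y) ⊆ K := by
    intro z hz
    obtain ⟨w, hw, hwz⟩ := hKc.intermediate_value hx hy he.continuousOn (Set.Ioo_subset_Icc_self hz)
    exact hinj hwz ▸ hw
  obtain ⟨z, hzK, hz⟩ := hKc.intermediate_value hx hy he.continuousOn
    (show (e x + e y) / 2 ∈ Set.Icc (e x) (e y) from ⟨by linarith, by linarith⟩)
  have hzU : z ∈ e ⁻¹' Set.Ioo (e x) (e y) := by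
    rw [Set.mem_preimage, hz]; exact ⟨by linarith, by linarith⟩
  obtain ⟨n, hn⟩ := hT.exists_iterate_mem (isOpen_Ioo.preimage he) ⟨z, hzU⟩ z
  have hTn : Continuous T^[n + 1] := hT.cont.iterate _
  have hmaps : ∀ w ∈ K, T^[n + 1] w ∈ K := by
    have hsub : T^[n + 1] '' K ⊆ connectedComponent (T^[n + 1] z) :=
      (hKc.image _ hTn.continuousOn).subset_connectedComponent ⟨z, hzK, rfl⟩
    rw [← connectedComponent_eq (hU hn)] at hsub
    exact fun w hw => hsub ⟨w, hw, rfl⟩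
  have hKcomp : IsCompact K := isClosed_connectedComponent.isCompact
  obtain ⟨a, haK, ha⟩ := hKcomp.exists_isMinOn ⟨z, hzK⟩ he.continuousOn
  obtain ⟨b, hbK, hb⟩ := hKcomp.exists_isMaxOn ⟨z, hzK⟩ he.continuousOn
  have hb' : e (T^[n + 1] b) ≤ e b := hb (hmaps b hbK)
  have ha' : e a ≤ e (T^[n + 1] a) := ha (hmaps a haK)
  obtain ⟨w, -, hw⟩ := hKc.intermediate_value hbK haK
    (f := fun w => e (T^[n + 1] w) - e w) (by fun_prop)
    (show (0 : ℝ) ∈ Set.Icc _ _ from ⟨by linarith, by linarith⟩)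
  exact hX (hT.finite_of_periodic (hinj (sub_eq_zero.1 hw)))

end Structure

/-! ### Minimal sets as subsets of an ambient space -/

section Subsets

variable {Y : Type*} [TopologicalSpace Y]

lemma MinimalSystemOn.isMinimalMap {f : Y → Y} (hf : Continuous f) {M : Set Y}
    (hM : IsClosed M) (h : MinimalSystemOn f M) :
    ∃ T : M → M, IsMinimalMap T := by
  obtain ⟨hne, him, hmin⟩ := h
  have hmaps : MapsTo f M M := fun x hx => him ▸ ⟨x, hx, rfl⟩
  refine ⟨hmaps.restrict, hf.restrict hmaps, fun N hN hNne hNm => ?_⟩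
  have := hmin (Subtype.val '' N) (by simp) (hNne.image _)
    (hM.isClosedEmbedding_subtypeVal.isClosedMap _ hN) (by
      rintro _ ⟨_, ⟨x, hx, rfl⟩, rfl⟩
      exact ⟨_, hNm hx, rfl⟩)
  ext x
  have hx : (x : Y) ∈ Subtype.val '' N := by rw [this]; exact x.2
  simpa using hx

/-- If a compact set `M` lies on a curve `e` parametrized by a closed interval, and the real
function `c` recovers the parameter of the points of `M`, then every minimal map of `M` extends to
the ambient space: extend `c ∘ T` by the Tietze theorem, clamp to the interval and apply `e`. -/
lemma mem_MSpace_of_retract [NormalSpace Y] [T2Space Y] {M : Set Y} (hM : IsCompact M)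
    (hne : M.Nonempty) {T : M → M} (hT : IsMinimalMap T) {a b : ℝ} (hab : a ≤ b)
    {c : Y → ℝ} (hc : Continuous c) (hcM : ∀ p ∈ M, c p ∈ Set.Icc a b)
    {e : Set.Icc a b → Y} (he : Continuous e) (hec : ∀ p (hp : p ∈ M), e ⟨c p, hcM p hp⟩ = p) :
    M ∈ MSpace Y := by
  have hTc := hT.cont
  obtain ⟨g, hg⟩ := ContinuousMap.exists_restrict_eq hM.isClosed
    (⟨fun x => c (T x), by fun_prop⟩ : C(M, ℝ))
  have hgM : ∀ x : M, e (Set.projIcc a b hab (g x)) = T x := by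
    intro x
    have h1 : g x = c (T x) := DFunLike.congr_fun hg x
    rw [h1, Set.projIcc_of_mem hab (hcM _ (T x).2)]
    exact hec _ (T x).2
  have := hM.isClosed
  have : CompactSpace M := isCompact_iff_compactSpace.1 hM
  have : Nonempty M := hne.to_subtype
  have hsurj : Set.range T = Set.univ :=
    hT.eq_univ _ (isCompact_range hTc).isClosed (Set.range_nonempty T)
      (fun x _ => Set.mem_range_self x)
  refine ⟨hM, fun y => e (Set.projIcc a b hab (g y)), by fun_prop, hne, ?_, ?_⟩
  · ext y
    constructor
    · rintro ⟨x, hx, rfl⟩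
      simp only [hgM ⟨x, hx⟩]
      exact (T _).2
    · intro hy
      obtain ⟨x, hx⟩ := Set.range_eq_univ.1 hsurj ⟨y, hy⟩
      exact ⟨x, x.2, by simp only [hgM x, hx]⟩
  · intro N hNM hNne hN hNm
    have := hT.eq_univ (Subtype.val ⁻¹' N) (hN.preimage continuous_subtype_val)
      (by obtain ⟨x, hx⟩ := hNne; exact ⟨⟨x, hNM hx⟩, hx⟩)
      (fun x hx => by
        have := hNm ⟨x, hx, rfl⟩
        simp only [hgM x] at this
        exact this)
    refine hNM.antisymm fun x hx => ?_
    have h : (⟨x, hx⟩ : M) ∈ Subtype.val ⁻¹' N := this ▸ Set.mem_univ _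
    exact h

/-- A nonempty finite set or a Cantor set is the phase space of a minimal system. -/
lemma exists_isMinimalMap [T2Space Y] [SecondCountableTopology Y] {M : Set Y}
    (h : (M.Finite ∧ M.Nonempty) ∨ IsCantorSet M) : ∃ T : M → M, IsMinimalMap T := by
  rcases h with ⟨hfin, hne⟩ | ⟨hne, hc, htd, hiso⟩
  · have := hfin.to_subtype
    have := hne.to_subtype
    exact exists_isMinimalMap_of_finite
  · have := hne.to_subtype
    have : CompactSpace M := isCompact_iff_compactSpace.1 hc
    have : TotallyDisconnectedSpace M := totallyDisconnectedSpace_subtype_iff.2 htd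
    exact exists_isMinimalMap_of_cantor hiso

/-- A compact minimal system embedding in the line is finite or a Cantor set. -/
lemma finite_or_isCantorSet [T2Space Y] {M : Set Y} (hc : IsCompact M) (hne : M.Nonempty)
    {T : M → M} (hT : IsMinimalMap T) {e : Y → ℝ} (he : Continuous e) (hinj : Set.InjOn e M) :
    (M.Finite ∧ M.Nonempty) ∨ IsCantorSet M := by
  by_cases hfin : Finite M
  · exact Or.inl ⟨Set.toFinite M, hne⟩
  · have : CompactSpace M := isCompact_iff_compactSpace.1 hc
    exact Or.inr ⟨hne, hc, totallyDisconnectedSpace_subtype_iff.1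
      (hT.totallyDisconnectedSpace hfin (he.comp continuous_subtype_val)
        (Set.injOn_iff_injective.1 hinj)), hT.noIsolatedPoints hfin⟩

lemma isCantorSet_image_val {Z : Set Y} {M : Set Z} (h : IsCantorSet M) :
    IsCantorSet (Subtype.val '' M) := by
  obtain ⟨hne, hc, htd, hiso⟩ := h
  refine ⟨hne.image _, hc.image continuous_subtype_val,
    IsEmbedding.subtypeVal.isTotallyDisconnected_image.2 htd, fun y hy => ?_⟩
  let φ := IsEmbedding.subtypeVal.homeomorphImage M
  refine hiso (φ.symm y) ?_
  have : ({φ.symm y} : Set M) = φ ⁻¹' {y} := by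
    ext x; simp [φ.eq_symm_apply]
  rw [this]
  exact hy.preimage φ.continuous

lemma isCantorSet_of_image_val {Z : Set Y} {M : Set Z} (h : IsCantorSet (Subtype.val '' M)) :
    IsCantorSet M := by
  obtain ⟨hne, hc, htd, hiso⟩ := h
  refine ⟨Set.image_nonempty.1 hne, IsEmbedding.subtypeVal.isCompact_iff.2 hc,
    IsEmbedding.subtypeVal.isTotallyDisconnected_image.1 htd, fun y hy => ?_⟩
  let φ := IsEmbedding.subtypeVal.homeomorphImage M
  refine hiso (φ y) ?_
  have : ({φ y} : Set _) = φ.symm ⁻¹' {y} := by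
    ext x; simp [φ.symm_apply_eq]
  rw [this]
  exact hy.preimage φ.symm.continuous

end Subsets

/-! ### The topologist's sine curve -/

section SineCurve

/-- Near the limit segment the sine curve attains every height `s ∈ [-1, 1]`. -/
lemma exists_sin_inv_eq {s ε : ℝ} (hs : s ∈ Set.Icc (-1 : ℝ) 1) (hε : 0 < ε) :
    ∃ x ∈ Set.Ioc 0 ε, Real.sin (1 / x) = s := by
  obtain ⟨n, hn⟩ := exists_nat_gt (1 / ε + Real.pi)
  have hpi := Real.pi_gt_three
  have h1 := Real.neg_pi_div_two_le_arcsin s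
  have hε' : 0 < 1 / ε := by positivity
  have hn0 : (0 : ℝ) ≤ n := n.cast_nonneg
  have hbig : 1 / ε < Real.arcsin s + n * (2 * Real.pi) := by nlinarith
  refine ⟨1 / (Real.arcsin s + n * (2 * Real.pi)), ⟨?_, ?_⟩, ?_⟩
  · have := hε'.trans hbig
    positivity
  · rw [one_div_le (hε'.trans hbig) hε]
    exact hbig.le
  · rw [one_div_one_div, Real.sin_add_nat_mul_two_pi, Real.sin_arcsin hs.1 hs.2]

lemma mem_TSC_iff {p : ℝ × ℝ} : p ∈ TSC ↔
    (0 < p.1 ∧ p.1 ≤ 1 ∧ p.2 = Real.sin (1 / p.1)) ∨ (p.1 = 0 ∧ p.2 ∈ Set.Icc (-1 : ℝ) 1) := by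
  constructor
  · rintro (⟨x, hx, rfl⟩ | ⟨h1, h2⟩)
    · exact Or.inl ⟨hx.1, hx.2, rfl⟩
    · exact Or.inr ⟨h1, h2⟩
  · rintro (⟨h1, h2, h3⟩ | ⟨h1, h2⟩)
    · exact Or.inl ⟨p.1, ⟨h1, h2⟩, Prod.ext rfl h3⟩
    · exact Or.inr ⟨h1, h2⟩

lemma TSC_fst_nonneg (p : TSC) : 0 ≤ p.1.1 := by
  rcases mem_TSC_iff.1 p.2 with h | h
  · exact h.1.le
  · exact h.1.ge

/-- A path in the sine curve that meets the limit segment never leaves it. -/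
lemma path_fst_eq_zero {γ : ℝ → TSC} (hγ : Continuous γ) {t₀ : ℝ} (h₀ : (γ t₀).1.1 = 0) (t : ℝ) :
    (γ t).1.1 = 0 := by
  have hopen : IsOpen {t | (γ t).1.1 = 0} := by
    rw [Metric.isOpen_iff]
    intro t₁ (ht₁ : (γ t₁).1.1 = 0)
    have hy : ContinuousAt (fun t => (γ t).1.2) t₁ := by fun_prop
    obtain ⟨δ, hδ, hball⟩ := Metric.continuousAt_iff.1 hy 1 one_pos
    refine ⟨δ, hδ, fun t₂ ht₂ => ?_⟩
    by_contra hne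
    have hpos : 0 < (γ t₂).1.1 := lt_of_le_of_ne (TSC_fst_nonneg _) (Ne.symm hne)
    -- By the intermediate value theorem the path takes both heights `1` and `-1` in the ball.
    have key : ∀ s ∈ Set.Icc (-1 : ℝ) 1, ∃ t ∈ Metric.ball t₁ δ, (γ t).1.2 = s := by
      intro s hs
      obtain ⟨x, hx, hxs⟩ := exists_sin_inv_eq hs hpos
      obtain ⟨t, ht, htx⟩ := (convex_ball t₁ δ).isPreconnected.intermediate_value
        (Metric.mem_ball_self hδ) ht₂ (f := fun t => (γ t).1.1) (by fun_prop)
        (show x ∈ Set.Icc _ _ from ⟨by rw [ht₁]; exact hx.1.le, hx.2⟩)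
      refine ⟨t, ht, ?_⟩
      simp only at htx
      rcases mem_TSC_iff.1 (γ t).2 with h | h
      · rw [h.2.2, htx, hxs]
      · exact absurd (htx.symm.trans h.1) hx.1.ne'
    obtain ⟨u, hu, hu1⟩ := key 1 (by simp)
    obtain ⟨v, hv, hv1⟩ := key (-1) (by simp)
    have hu' := hball hu
    have hv' := hball hv
    rw [Real.dist_eq, abs_lt] at hu' hv'
    linarith [hu'.1, hu'.2, hv'.1, hv'.2]
  have hclosed : IsClosed {t | (γ t).1.1 = 0} :=
    isClosed_eq (by fun_prop) continuous_const
  have h := IsClopen.eq_univ ⟨hclosed, hopen⟩ ⟨t₀, h₀⟩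
  exact h.ge (Set.mem_univ t)

/-- A path-connected subset of the sine curve that meets the limit segment lies in it, so the
segment and its complement are unions of path components. -/
lemma isPathConnected_fst_eq_zero {C : Set TSC} (hC : IsPathConnected C) {p q : TSC} (hp : p ∈ C)
    (hq : q ∈ C) (h : p.1.1 = 0) : q.1.1 = 0 := by
  obtain ⟨γ, -⟩ := hC.joinedIn p hp q hq
  have := path_fst_eq_zero γ.continuous_extend (t₀ := 0) (by simpa using h) 1
  simpa using this

/-- The parametrization of the limit segment by height. -/
def segMap (y : Set.Icc (-1 : ℝ) 1) : TSC := ⟨(0, y), mem_TSC_iff.2 (Or.inr ⟨rfl, y.2⟩)⟩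

/-- The parametrization of the graph part of the sine curve by abscissa. -/
noncomputable def graphMap (x : Set.Ioc (0 : ℝ) 1) : TSC :=
  ⟨(x, Real.sin (1 / x)), mem_TSC_iff.2 (Or.inl ⟨x.2.1, x.2.2, rfl⟩)⟩

lemma continuous_segMap : Continuous segMap := by unfold segMap; fun_prop

lemma continuous_graphMap : Continuous graphMap := by
  unfold graphMap
  refine Continuous.subtype_mk (continuous_subtype_val.prodMk ?_) _
  refine Real.continuous_sin.comp (continuous_const.div continuous_subtype_val fun x => x.2.1.ne')

lemma range_segMap : Set.range segMap = {p : TSC | p.1.1 = 0} := by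
  ext p
  constructor
  · rintro ⟨y, rfl⟩
    rfl
  · intro h
    rcases mem_TSC_iff.1 p.2 with h' | h'
    · exact absurd h h'.1.ne'
    · exact ⟨⟨_, h'.2⟩, Subtype.ext (Prod.ext h'.1.symm rfl)⟩

lemma range_graphMap : Set.range graphMap = {p : TSC | p.1.1 ≠ 0} := by
  ext p
  constructor
  · rintro ⟨x, rfl⟩
    exact x.2.1.ne'
  · intro h
    rcases mem_TSC_iff.1 p.2 with h' | h'
    · exact ⟨⟨_, h'.1, h'.2.1⟩, Subtype.ext (Prod.ext rfl h'.2.2.symm)⟩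
    · exact absurd h'.1 h

lemma isPathConnected_seg : IsPathConnected {p : TSC | p.1.1 = 0} := by
  rw [← range_segMap]
  have : PathConnectedSpace (Set.Icc (-1 : ℝ) 1) := isPathConnected_iff_pathConnectedSpace.1
    ((convex_Icc _ _).isPathConnected ⟨0, by simp⟩)
  exact isPathConnected_range continuous_segMap

lemma isPathConnected_graph : IsPathConnected {p : TSC | p.1.1 ≠ 0} := by
  rw [← range_graphMap]
  have : PathConnectedSpace (Set.Ioc (0 : ℝ) 1) := isPathConnected_iff_pathConnectedSpace.1
    ((convex_Ioc _ _).isPathConnected ⟨1, by simp⟩)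
  exact isPathConnected_range continuous_graphMap

lemma dense_graph : Dense {p : TSC | p.1.1 ≠ 0} := by
  intro p
  by_cases hp : p.1.1 = 0
  · rw [Metric.mem_closure_iff]
    intro ε hε
    rcases mem_TSC_iff.1 p.2 with h | h
    · exact absurd hp h.1.ne'
    obtain ⟨x, hx, hxs⟩ := exists_sin_inv_eq h.2 (show 0 < min (ε / 2) 1 by positivity)
    refine ⟨graphMap ⟨x, hx.1, hx.2.trans (min_le_right _ _)⟩, hx.1.ne', ?_⟩
    have h2 : x ≤ ε / 2 := hx.2.trans (min_le_left _ _)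
    rw [Subtype.dist_eq, Prod.dist_eq]
    simp only [graphMap, hxs, hp, dist_self, Real.dist_eq, zero_sub, abs_neg, abs_of_pos hx.1]
    exact max_lt (by linarith) hε
  · exact subset_closure hp

/-- A minimal set `M` of the sine curve lies in the limit segment or avoids it. Suppose it meets
both the segment and the graph part. If the segment is mapped into itself, its trace on `M` is a
proper closed invariant subset. Otherwise the segment is mapped into the graph part, so a point of
`M` on the segment has its preimage in the graph part; hence the whole graph part is mapped into
the segment, and by density so is the segment itself. -/
lemma MinimalSystemOn.dichotomy {f : TSC → TSC} (hf : Continuous f) {M : Set TSC}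
    (hc : IsCompact M) (hM : MinimalSystemOn f M) :
    (∀ p ∈ M, p.1.1 = 0) ∨ (∀ p ∈ M, p.1.1 ≠ 0) := by
  obtain ⟨-, him, hmin⟩ := hM
  have hsegclosed : IsClosed {p : TSC | p.1.1 = 0} :=
    isClosed_eq (by fun_prop) continuous_const
  have hseg := isPathConnected_seg.image hf
  have hgraph := isPathConnected_graph.image hf
  by_contra! hcon
  obtain ⟨⟨q, hqM, hq⟩, p, hpM, hp⟩ := hcon
  by_cases h1 : (f p).1.1 = 0
  · have hinv : ∀ r : TSC, r.1.1 = 0 → (f r).1.1 = 0 := fun r hr =>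
      isPathConnected_fst_eq_zero hseg ⟨p, hp, rfl⟩ ⟨r, hr, rfl⟩ h1
    have := hmin (M ∩ {p | p.1.1 = 0}) Set.inter_subset_left ⟨p, hpM, hp⟩
      (hc.isClosed.inter hsegclosed) (by
        rintro _ ⟨r, ⟨hrM, hr⟩, rfl⟩
        exact ⟨him ▸ ⟨r, hrM, rfl⟩, hinv r hr⟩)
    exact hq (this.ge hqM).2
  · have hout : ∀ r : TSC, r.1.1 = 0 → (f r).1.1 ≠ 0 := fun r hr h0 =>
      h1 (isPathConnected_fst_eq_zero hseg ⟨r, hr, rfl⟩ ⟨p, hp, rfl⟩ h0)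
    -- The point `p` of the limit segment has a preimage, which lies on the graph part.
    obtain ⟨r, hrM, hr⟩ := him.ge hpM
    have hr0 : r.1.1 ≠ 0 := fun h => hout r h (hr ▸ hp)
    have hG : {p : TSC | p.1.1 ≠ 0} ⊆ f ⁻¹' {p | p.1.1 = 0} := fun s hs =>
      isPathConnected_fst_eq_zero hgraph ⟨r, hr0, rfl⟩ ⟨s, hs, rfl⟩ (hr ▸ hp)
    exact h1 (closure_minimal hG (hsegclosed.preimage hf) (dense_graph p))

lemma injOn_snd {M : Set TSC} (h : ∀ p ∈ M, p.1.1 = 0) : Set.InjOn (fun p : TSC => p.1.2) M :=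
  fun p hp q hq hpq => Subtype.ext (Prod.ext ((h p hp).trans (h q hq).symm) hpq)

lemma TSC_snd_eq {p : TSC} (h : p.1.1 ≠ 0) : p.1.2 = Real.sin (1 / p.1.1) := by
  rcases mem_TSC_iff.1 p.2 with h' | h'
  · exact h'.2.2
  · exact absurd h'.1 h

lemma injOn_fst {M : Set TSC} (h : ∀ p ∈ M, p.1.1 ≠ 0) : Set.InjOn (fun p : TSC => p.1.1) M := by
  intro p hp q hq hpq
  refine Subtype.ext (Prod.ext hpq ?_)
  rw [TSC_snd_eq (h p hp), TSC_snd_eq (h q hq)]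
  exact congrArg (fun x => Real.sin (1 / x)) hpq

lemma image_subset_tscL {M : Set TSC} : Subtype.val '' M ⊆ tscL ↔ ∀ p ∈ M, p.1.1 = 0 := by
  rw [Set.image_subset_iff]
  refine forall₂_congr fun p hp => ⟨fun h => h.1, fun h => ⟨h, ?_⟩⟩
  rcases mem_TSC_iff.1 p.2 with h' | h'
  · exact absurd h h'.1.ne'
  · exact h'.2

lemma tscJ_union_tscR :
    tscJ ∪ tscR = {p | ∃ x ∈ Set.Ioc (0 : ℝ) 1, p = (x, Real.sin (1 / x))} := by
  ext p
  constructor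
  · rintro (⟨x, hx, rfl⟩ | h)
    · exact ⟨x, ⟨hx.1, hx.2.le⟩, rfl⟩
    · exact ⟨1, by simp, by simpa [tscR] using h⟩
  · rintro ⟨x, hx, rfl⟩
    rcases hx.2.eq_or_lt with rfl | h
    · right; simp [tscR]
    · exact Or.inl ⟨x, ⟨hx.1, h⟩, rfl⟩

lemma image_subset_tscJR {M : Set TSC} :
    Subtype.val '' M ⊆ tscJ ∪ tscR ↔ ∀ p ∈ M, p.1.1 ≠ 0 := by
  rw [Set.image_subset_iff, tscJ_union_tscR]
  refine forall₂_congr fun p hp => ⟨?_, fun h => ?_⟩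
  · rintro ⟨x, hx, hpx⟩
    rw [hpx]
    exact hx.1.ne'
  · rcases mem_TSC_iff.1 p.2 with h' | h'
    · exact ⟨_, ⟨h'.1, h'.2.1⟩, Prod.ext rfl h'.2.2⟩
    · exact absurd h'.1 h

lemma mem_MSpace_TSC_iff {M : Set TSC} : M ∈ MSpace TSC ↔
    ((∀ p ∈ M, p.1.1 = 0) ∨ (∀ p ∈ M, p.1.1 ≠ 0)) ∧
      ((M.Finite ∧ M.Nonempty) ∨ IsCantorSet M) := by
  constructor
  · rintro ⟨hc, f, hf, hM⟩
    have hd := hM.dichotomy hf hc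
    obtain ⟨T, hT⟩ := hM.isMinimalMap hf hc.isClosed
    refine ⟨hd, ?_⟩
    rcases hd with h | h
    · exact finite_or_isCantorSet hc hM.1 hT (by fun_prop) (injOn_snd h)
    · exact finite_or_isCantorSet hc hM.1 hT (by fun_prop) (injOn_fst h)
  · rintro ⟨hd, hM⟩
    obtain ⟨T, hT⟩ := exists_isMinimalMap hM
    have hc : IsCompact M := hM.elim (fun h => h.1.isCompact) (fun h => h.2.1)
    have hne : M.Nonempty := hM.elim (fun h => h.2) (fun h => h.1)
    rcases hd with h | h
    · have hcM : ∀ p ∈ M, p.1.2 ∈ Set.Icc (-1 : ℝ) 1 := fun p hp =>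
        ((mem_TSC_iff.1 p.2).resolve_left fun h' => h'.1.ne' (h p hp)).2
      exact mem_MSpace_of_retract hc hne hT (by norm_num) (c := fun p => p.1.2) (by fun_prop) hcM
        continuous_segMap fun p hp => Subtype.ext (Prod.ext (h p hp).symm rfl)
    · have hpos : ∀ p ∈ M, 0 < p.1.1 := fun p hp =>
        lt_of_le_of_ne (TSC_fst_nonneg p) (h p hp).symm
      have hle : ∀ p : TSC, p.1.1 ≤ 1 := fun p => by
        rcases mem_TSC_iff.1 p.2 with h' | h'
        · exact h'.2.1
        · rw [h'.1]; exact zero_le_one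
      -- By compactness the abscissas of `M` are bounded away from `0`.
      obtain ⟨q, hq, hmin⟩ := hc.exists_isMinOn hne
        (f := fun p : TSC => p.1.1) (by fun_prop)
      let ι : Set.Icc q.1.1 1 → Set.Ioc (0 : ℝ) 1 := fun x => ⟨x, (hpos q hq).trans_le x.2.1, x.2.2⟩
      have hι : Continuous ι := by fun_prop
      exact mem_MSpace_of_retract hc hne hT (hle q) (c := fun p => p.1.1) (by fun_prop)
        (fun p hp => ⟨hmin hp, hle p⟩) (continuous_graphMap.comp hι)
        fun p hp => Subtype.ext (Prod.ext rfl (TSC_snd_eq (h p hp)).symm)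

end SineCurve

/-- `M ∈ 𝓜(TSC)` iff `M ⊆ L` and `M` is a nonempty finite set or a Cantor
set, or `M ⊆ J ∪ R` and `M` is a nonempty finite set or a Cantor set. -/
theorem stmt19 (M : Set (ℝ × ℝ)) :
    M ∈ MSetIn TSC ↔
      (M ⊆ tscL ∧ ((M.Finite ∧ M.Nonempty) ∨ IsCantorSet M)) ∨
      (M ⊆ tscJ ∪ tscR ∧ ((M.Finite ∧ M.Nonempty) ∨ IsCantorSet M)) := by
  have hsub : ∀ {M : Set (ℝ × ℝ)}, M ⊆ tscL ∨ M ⊆ tscJ ∪ tscR → M ⊆ TSC := by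
    rintro M (h | h)
    · exact h.trans Set.subset_union_right
    · exact (h.trans_eq tscJ_union_tscR).trans Set.subset_union_left
  rw [← or_and_right]
  constructor
  · rintro ⟨M', hM', rfl⟩
    obtain ⟨hd, hM⟩ := mem_MSpace_TSC_iff.1 hM'
    rw [image_subset_tscL, image_subset_tscJR]
    exact ⟨hd, hM.imp (fun h => ⟨h.1.image _, h.2.image _⟩) isCantorSet_image_val⟩
  · rintro ⟨hd, hM⟩
    obtain ⟨M', rfl⟩ : ∃ M' : Set TSC, M = Subtype.val '' M' :=
      ⟨Subtype.val ⁻¹' M, by rw [Subtype.image_preimage_coe, Set.inter_eq_right.2 (hsub hd)]⟩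
    rw [image_subset_tscL, image_subset_tscJR] at hd
    refine ⟨M', mem_MSpace_TSC_iff.2 ⟨hd, hM.imp (fun h => ?_) isCantorSet_of_image_val⟩, rfl⟩
    exact ⟨h.1.of_finite_image Subtype.val_injective.injOn, Set.image_nonempty.1 h.2⟩
end
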